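/- arXiv:2509.13709 — 2 statements merged into one kernel-verified Lean document; each statement's English description precedes it below -/
import Mathlib

section
/- 𝒫-subharmonic functions are the convex functions: Let X ⊂ ℝⁿ be open and convex and let u ∈ USC(X) with u not identically −∞. Then u is 𝒫-subharmonic on X (i.e. D^{2,+}_x u ⊂ 𝒫 for every x ∈ X) if and only if u is real-valued and convex on X. -/
open Set Filter Topology Bornology
open scoped Pointwise

noncomputable section

/-- Euclidean space `ℝⁿ`. -/
abbrev En (n : ℕ) : Type := EuclideanSpace ℝ (Fin n)

/-- The space `S(n)` of real symmetric `n×n` matrices. -/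
abbrev SymMat (n : ℕ) : Type := selfAdjoint (Matrix (Fin n) (Fin n) ℝ)

/-- The (constant coefficient) 2-jet space `J² = ℝ × ℝⁿ × S(n)`. -/
abbrev Jet (n : ℕ) : Type := ℝ × En n × SymMat n

/-- `P ≥ 0`, i.e. `P` is positive semidefinite. -/
def PSD {n : ℕ} (P : SymMat n) : Prop := (P : Matrix (Fin n) (Fin n) ℝ).PosSemidef

/-- The Hessian matrix `D²φ(x)` of `φ` at `x`. -/
def hess {n : ℕ} (φ : En n → ℝ) (x : En n) : Matrix (Fin n) (Fin n) ℝ :=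
  Matrix.of fun i j =>
    iteratedFDeriv ℝ 2 φ x ![EuclideanSpace.single i (1 : ℝ), EuclideanSpace.single j (1 : ℝ)]

/-- `A ∈ D^{2,+}_x u`: `A` is the Hessian at `x` of an upper contact function for `u` at `x`. -/
def IsUpperContactHessian {n : ℕ} (X : Set (En n)) (u : En n → EReal) (x : En n)
    (A : SymMat n) : Prop :=
  ∃ φ : En n → ℝ, ∃ V : Set (En n), IsOpen V ∧ x ∈ V ∧ V ⊆ X ∧ ContDiffOn ℝ 2 φ V ∧
    (∀ y ∈ V, u y ≤ (φ y : EReal)) ∧ u x = (φ x : EReal) ∧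
    (A : Matrix (Fin n) (Fin n) ℝ) = hess φ x

/-!
Second derivatives enter only as limits of second differences `φ (x + tv) + φ (x - tv) - 2 φ x`.
If `u` is convex these are nonnegative for `u`, hence for every function touching `u` from above.

Conversely, let `u` be `𝒫`-subharmonic. If a `C²` function has, at each interior point of a compact
set, a direction of negative second derivative, and lies above `u` on the frontier, then it lies
above `u` throughout: otherwise a translate of it would touch `u` from above at an interior point.
On a thin tube around a segment with endpoint bounds `u < α` and `u < β`, compare `u` with the
affine interpolation of `α` and `β`, plus `ε s (1 - s)` in the axial coordinate `s`, plus a large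
multiple of the squared transversal distance to the axis. Letting `ε → 0` gives convexity along the
segment. If `u` were `-∞` at one point, letting `α → -∞` would make it `-∞` everywhere.
-/

section SecondDifference

theorem tendsto_secondDifference_of_hasDerivAt {f f' : ℝ → ℝ} {a c : ℝ}
    (hf : ∀ᶠ t in 𝓝 a, HasDerivAt f (f' t) t) (hf' : HasDerivAt f' c a) :
    Tendsto (fun t : ℝ => (f (a + t) + f (a - t) - 2 * f a) / t ^ 2) (𝓝[≠] 0) (𝓝 c) := by
  have tendsto_add : Tendsto (fun t : ℝ => a + t) (𝓝 0) (𝓝 a) :=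
    Continuous.tendsto' (by fun_prop) _ _ (add_zero a)
  have tendsto_sub : Tendsto (fun t : ℝ => a - t) (𝓝 0) (𝓝 a) :=
    Continuous.tendsto' (by fun_prop) _ _ (sub_zero a)
  have hnum : ∀ᶠ t in 𝓝[≠] (0 : ℝ),
      HasDerivAt (fun t => f (a + t) + f (a - t) - 2 * f a) (f' (a + t) - f' (a - t)) t := by
    filter_upwards [nhdsWithin_le_nhds (tendsto_add.eventually hf),
      nhdsWithin_le_nhds (tendsto_sub.eventually hf)] with t hadd hsub
    exact ((hadd.comp_const_add a t).add (hsub.comp_const_sub a t)).sub_const _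
  have hcont : ContinuousAt f a := hf.self_of_nhds.continuousAt
  have hnum_zero : Tendsto (fun t => f (a + t) + f (a - t) - 2 * f a) (𝓝[≠] 0) (𝓝 0) := by
    have := ((hcont.tendsto.comp tendsto_add).add (hcont.tendsto.comp tendsto_sub)).sub_const
      (2 * f a)
    rw [← two_mul, sub_self] at this
    exact this.mono_left nhdsWithin_le_nhds
  have hden : ∀ t : ℝ, HasDerivAt (fun t : ℝ => t ^ 2) (2 * t) t := fun t => by
    simpa using hasDerivAt_pow 2 t
  have hden_zero : Tendsto (fun t : ℝ => t ^ 2) (𝓝[≠] 0) (𝓝 0) :=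
    (Continuous.tendsto' (by fun_prop) _ _ (by simp)).mono_left nhdsWithin_le_nhds
  have hratio : Tendsto (fun t => (f' (a + t) - f' (a - t)) / (2 * t)) (𝓝[≠] 0) (𝓝 c) := by
    have hderiv : HasDerivAt (fun t => f' (a + t) - f' (a - t)) (c + c) 0 := by
      rw [← add_zero a] at hf'
      have hadd := hf'.comp_const_add a 0
      rw [add_zero, ← sub_zero a] at hf'
      exact (hadd.sub (hf'.comp_const_sub a 0)).congr_deriv (sub_neg_eq_add c c)
    have := hderiv.tendsto_slope.div_const 2
    rw [add_self_div_two] at this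
    refine this.congr fun t => ?_
    simp only [slope_def_field, add_zero, sub_zero, sub_self, div_div]
    rw [mul_comm t 2]
  exact HasDerivAt.lhopital_zero_nhdsNE hnum (.of_forall hden)
    (eventually_mem_nhdsWithin.mono fun t ht => mul_ne_zero two_ne_zero ht)
    hnum_zero hden_zero hratio

variable {E : Type*} [NormedAddCommGroup E] [NormedSpace ℝ E]

theorem tendsto_add_smul_nhds_zero (x v : E) :
    Tendsto (fun t : ℝ => x + t • v) (𝓝 0) (𝓝 x) :=
  Continuous.tendsto' (by fun_prop) _ _ (by simp)

theorem tendsto_sub_smul_nhds_zero (x v : E) :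
    Tendsto (fun t : ℝ => x - t • v) (𝓝 0) (𝓝 x) :=
  Continuous.tendsto' (by fun_prop) _ _ (by simp)

theorem tendsto_secondDifference_of_contDiffAt {φ : E → ℝ} {x : E} (hφ : ContDiffAt ℝ 2 φ x)
    (v : E) :
    Tendsto (fun t : ℝ => (φ (x + t • v) + φ (x - t • v) - 2 * φ x) / t ^ 2) (𝓝[≠] 0)
      (𝓝 (fderiv ℝ (fderiv ℝ φ) x v v)) := by
  have hline : ∀ t : ℝ, HasDerivAt (fun t : ℝ => x + t • v) v t := fun t => by
    simpa using ((hasDerivAt_id t).smul_const v).const_add x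
  have hfirst : ∀ᶠ t : ℝ in 𝓝 0,
      HasDerivAt (fun t : ℝ => φ (x + t • v)) (fderiv ℝ φ (x + t • v) v) t := by
    filter_upwards [(tendsto_add_smul_nhds_zero x v).eventually (hφ.eventually (by simp))]
      with t ht
    exact (ht.differentiableAt two_ne_zero).hasFDerivAt.comp_hasDerivAt t (hline t)
  have hsecond : HasDerivAt (fun t : ℝ => fderiv ℝ φ (x + t • v) v)
      (fderiv ℝ (fderiv ℝ φ) x v v) 0 := by
    have hdiff : HasFDerivAt (fderiv ℝ φ) (fderiv ℝ (fderiv ℝ φ) x) (x + (0 : ℝ) • v) := by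
      rw [zero_smul, add_zero]
      exact ((hφ.fderiv_right (m := 1) (by norm_num)).differentiableAt one_ne_zero).hasFDerivAt
    exact (ContinuousLinearMap.apply ℝ ℝ v).hasFDerivAt.comp_hasDerivAt 0
      (hdiff.comp_hasDerivAt 0 (hline 0))
  simpa [← sub_eq_add_neg] using tendsto_secondDifference_of_hasDerivAt hfirst hsecond

end SecondDifference

section UpperSemicontinuous

theorem exists_forall_le_add_sub {Y : Type*} [TopologicalSpace Y] {T : Set Y} {u : Y → EReal}
    (husc : UpperSemicontinuousOn u T) (hT : IsCompact T) (hne : T.Nonempty)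
    {ψ : Y → ℝ} (hψ : ContinuousOn ψ T) :
    ∃ z ∈ T, ∀ y ∈ T, u y ≤ ψ y + (u z - ψ z) := by
  have hsub : UpperSemicontinuousOn (fun y => u y - ψ y) T := by
    simp only [sub_eq_add_neg]
    exact husc.add' (continuous_coe_real_ereal.comp_continuousOn hψ.neg).upperSemicontinuousOn
      fun y _ => EReal.continuousAt_add (.inr (EReal.coe_ne_bot _)) (.inr (EReal.coe_ne_top _))
  obtain ⟨z, hz, hmax⟩ := hsub.exists_isMaxOn hne hT
  refine ⟨z, hz, fun y hy => ?_⟩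
  rw [add_comm]
  exact (EReal.sub_le_iff_le_add (.inl (EReal.coe_ne_bot _)) (.inl (EReal.coe_ne_top _))).mp
    (hmax hy)

end UpperSemicontinuous

section Subharmonic

variable {E : Type*} [NormedAddCommGroup E] [NormedSpace ℝ E]

/-- `φ` is an upper contact function for `u` at `x`: a `C²` function lying above `u` near `x`
and agreeing with it at `x`. -/
structure IsUpperContactAt (u : E → EReal) (φ : E → ℝ) (x : E) : Prop where
  contDiffAt : ContDiffAt ℝ 2 φ x
  eventually_le : ∀ᶠ y in 𝓝 x, u y ≤ φ y
  eq : u x = φ x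

/-- `𝒫`-subharmonicity of `u` on `X`, free of coordinates: the second derivative of every upper
contact function at a point of `X` is a positive semidefinite bilinear form. -/
def PSubharmonicOn (X : Set E) (u : E → EReal) : Prop :=
  ∀ x ∈ X, ∀ φ : E → ℝ, IsUpperContactAt u φ x → ∀ v, 0 ≤ fderiv ℝ (fderiv ℝ φ) x v v

variable {X T : Set E} {u : E → EReal}

theorem PSubharmonicOn.mono (hu : PSubharmonicOn X u) (hTX : T ⊆ X) : PSubharmonicOn T u :=
  fun x hx => hu x (hTX hx)

theorem sndFDeriv_nonneg_of_convexOn_le {f φ : E → ℝ} {x : E} (hf : ConvexOn ℝ X f)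
    (hX : X ∈ 𝓝 x) (hφ : ContDiffAt ℝ 2 φ x) (hle : ∀ᶠ y in 𝓝 x, f y ≤ φ y) (heq : f x = φ x)
    (v : E) : 0 ≤ fderiv ℝ (fderiv ℝ φ) x v v := by
  refine ge_of_tendsto (tendsto_secondDifference_of_contDiffAt hφ v) (nhdsWithin_le_nhds ?_)
  have hnear := hle.and hX
  filter_upwards [(tendsto_add_smul_nhds_zero x v).eventually hnear,
    (tendsto_sub_smul_nhds_zero x v).eventually hnear] with t ⟨hle_add, hadd⟩ ⟨hle_sub, hsub⟩
  have hmid : (1 / 2 : ℝ) • (x + t • v) + (1 / 2 : ℝ) • (x - t • v) = x := by module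
  have hconv := hf.2 hadd hsub one_half_pos.le one_half_pos.le (add_halves 1)
  rw [hmid, heq, smul_eq_mul, smul_eq_mul] at hconv
  exact div_nonneg (by linarith) (sq_nonneg t)

theorem PSubharmonicOn.of_convexOn_toReal (hX : IsOpen X) (hbot : ∀ x ∈ X, u x ≠ ⊥)
    (hconv : ConvexOn ℝ X fun x => (u x).toReal) : PSubharmonicOn X u := by
  intro x hx φ hφ
  refine sndFDeriv_nonneg_of_convexOn_le hconv (hX.mem_nhds hx) hφ.contDiffAt ?_ (by simp [hφ.eq])
  filter_upwards [hφ.eventually_le, hX.mem_nhds hx] with y hle hy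
  simpa using EReal.toReal_le_toReal hle (hbot y hy) (EReal.coe_ne_top _)

theorem PSubharmonicOn.le_of_le_on_frontier (hu : PSubharmonicOn (interior T) u)
    (husc : UpperSemicontinuousOn u T) (hut : ∀ x ∈ T, u x < ⊤) (hT : IsCompact T)
    {ψ : E → ℝ} (hψc : ContinuousOn ψ T) (hψ : ContDiffOn ℝ 2 ψ (interior T))
    (hneg : ∀ x ∈ interior T, ∃ v, fderiv ℝ (fderiv ℝ ψ) x v v < 0)
    (hfr : ∀ y ∈ frontier T, u y ≤ ψ y) {y : E} (hy : y ∈ T) : u y ≤ ψ y := by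
  obtain ⟨z, hz, hmax⟩ := exists_forall_le_add_sub husc hT ⟨y, hy⟩ hψc
  suffices hle : u z ≤ ψ z by
    calc u y ≤ ψ y + (u z - ψ z) := hmax y hy
      _ ≤ ψ y + 0 := by gcongr; exact EReal.sub_nonpos.mpr hle
      _ = ψ y := add_zero _
  by_contra! hlt
  have hzint : z ∈ interior T := by
    rw [← self_sdiff_frontier]
    exact ⟨hz, fun h => hlt.not_ge (hfr z h)⟩
  have hψz : ContDiffAt ℝ 2 ψ z := hψ.contDiffAt (isOpen_interior.mem_nhds hzint)
  lift u z to ℝ using ⟨(hut z hz).ne, ne_bot_of_gt hlt⟩ with r hr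
  have hcontact : IsUpperContactAt u (fun y => ψ y + (r - ψ z)) z := by
    refine ⟨hψz.add contDiffAt_const, ?_, by simp [← hr]⟩
    filter_upwards [mem_interior_iff_mem_nhds.mp hzint] with y hy
    exact_mod_cast hmax y hy
  obtain ⟨v, hv⟩ := hneg z hzint
  have hderiv : fderiv ℝ (fun y => ψ y + (r - ψ z)) = fderiv ℝ ψ :=
    funext fun _ => fderiv_add_const _
  refine hv.not_ge ?_
  simpa only [hderiv] using hu z hzint _ hcontact v

end Subharmonic

section Tube

variable {E : Type*} [NormedAddCommGroup E] [NormedSpace ℝ E]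

/-- The projection of `E` onto the kernel of `s` along `d`, when `s d = 1`. -/
def transversal (s : E →L[ℝ] ℝ) (d : E) : E →L[ℝ] E :=
  ContinuousLinearMap.id ℝ E - s.smulRight d

/-- The closed tube of radius `δ` around the segment from `a` to `a + d`, cut off at its ends by
level sets of a functional `s` with `s d = 1`. -/
def tube (s : E →L[ℝ] ℝ) (a d : E) (δ : ℝ) : Set E :=
  {y | s (y - a) ∈ Icc 0 1 ∧ ‖transversal s d (y - a)‖ ≤ δ}

/-- The comparison function on a tube: the affine interpolation of `α` and `β` along the axis, plus
a term in `ε` making it strictly concave in the direction `d` and a term in `K` making it large on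
the lateral boundary. -/
def tubeBarrier (s : E →L[ℝ] ℝ) (a d : E) (α β ε K : ℝ) (y : E) : ℝ :=
  α + (β - α) * s (y - a) + ε * (s (y - a) * (1 - s (y - a))) + K * ‖transversal s d (y - a)‖ ^ 2

variable {s : E →L[ℝ] ℝ} {a d : E} {α β δ ε K : ℝ}

theorem smul_add_transversal (s : E →L[ℝ] ℝ) (d y : E) : s y • d + transversal s d y = y := by
  simp [transversal]

theorem transversal_self (hsd : s d = 1) : transversal s d d = 0 := by
  simp [transversal, hsd]

theorem tube_subset_cthickening : tube s a d δ ⊆ Metric.cthickening δ (segment ℝ a (a + d)) := by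
  rintro y ⟨hs, hp⟩
  refine Metric.mem_cthickening_of_dist_le y (a + s (y - a) • d) _ _ ?_ ?_
  · rw [segment_eq_image', add_sub_cancel_left]
    exact ⟨s (y - a), hs, rfl⟩
  · have hsplit : y - (a + s (y - a) • d) = transversal s d (y - a) := by
      rw [← sub_sub, sub_eq_iff_eq_add', smul_add_transversal]
    rwa [dist_eq_norm, hsplit]

theorem isClosed_tube : IsClosed (tube s a d δ) :=
  (isClosed_Icc.preimage (by fun_prop : Continuous fun y => s (y - a))).inter
    (isClosed_Iic.preimage (by fun_prop : Continuous fun y => ‖transversal s d (y - a)‖))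

theorem isCompact_segment (x y : E) : IsCompact (segment ℝ x y) := by
  rw [← convexHull_pair]
  exact (Set.toFinite {x, y}).isCompact_convexHull ℝ

theorem isCompact_tube [ProperSpace E] : IsCompact (tube s a d δ) :=
  (isCompact_segment a (a + d)).cthickening.of_isClosed_subset isClosed_tube
    tube_subset_cthickening

theorem add_smul_mem_tube (hsd : s d = 1) (hδ : 0 ≤ δ) {t : ℝ} (ht : t ∈ Icc (0 : ℝ) 1) :
    a + t • d ∈ tube s a d δ := by
  rw [tube, mem_ofPred_eq, add_sub_cancel_left, map_smul, map_smul, hsd, transversal_self hsd,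
    smul_zero, norm_zero, smul_eq_mul, mul_one]
  exact ⟨ht, hδ⟩

theorem mem_closedBall_of_mem_tube_of_eq_zero {y : E} (hy : y ∈ tube s a d δ)
    (hs : s (y - a) = 0) : y ∈ Metric.closedBall a δ := by
  rw [mem_closedBall_iff_norm, ← smul_add_transversal s d (y - a), hs, zero_smul, zero_add]
  exact hy.2

theorem mem_closedBall_of_mem_tube_of_eq_one {y : E} (hy : y ∈ tube s a d δ)
    (hs : s (y - a) = 1) : y ∈ Metric.closedBall (a + d) δ := by
  rw [mem_closedBall_iff_norm, ← sub_sub, ← smul_add_transversal s d (y - a), hs, one_smul,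
    add_sub_cancel_left]
  exact hy.2

theorem mem_tube_of_mem_frontier {y : E} (hy : y ∈ frontier (tube s a d δ)) :
    y ∈ tube s a d δ ∧
      (s (y - a) = 0 ∨ s (y - a) = 1 ∨ ‖transversal s d (y - a)‖ = δ) := by
  rw [isClosed_tube.frontier_eq] at hy
  obtain ⟨⟨⟨hs0, hs1⟩, hp⟩, hint⟩ := hy
  refine ⟨⟨⟨hs0, hs1⟩, hp⟩, ?_⟩
  contrapose! hint
  obtain ⟨hs0', hs1', hp'⟩ := hint
  have hopen : IsOpen {y | s (y - a) ∈ Ioo 0 1 ∧ ‖transversal s d (y - a)‖ < δ} :=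
    (isOpen_Ioo.preimage (by fun_prop : Continuous fun y => s (y - a))).inter
      (isOpen_Iio.preimage (by fun_prop : Continuous fun y => ‖transversal s d (y - a)‖))
  exact mem_interior.mpr ⟨_, fun z hz => ⟨Ioo_subset_Icc_self hz.1, hz.2.le⟩, hopen,
    ⟨hs0.lt_of_ne' hs0', hs1.lt_of_ne hs1'⟩, hp.lt_of_ne hp'⟩

theorem exists_pos_tube_subset {X U V : Set E} (hX : IsOpen X) (hseg : segment ℝ a (a + d) ⊆ X)
    (hU : U ∈ 𝓝 a) (hV : V ∈ 𝓝 (a + d)) :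
    ∃ δ > 0, tube s a d δ ⊆ X ∧ (∀ y ∈ tube s a d δ, s (y - a) = 0 → y ∈ U) ∧
      ∀ y ∈ tube s a d δ, s (y - a) = 1 → y ∈ V := by
  obtain ⟨δX, hδX, hsubX⟩ := (isCompact_segment a (a + d)).exists_cthickening_subset_open hX hseg
  obtain ⟨δU, hδU, hsubU⟩ := Metric.nhds_basis_closedBall.mem_iff.mp hU
  obtain ⟨δV, hδV, hsubV⟩ := Metric.nhds_basis_closedBall.mem_iff.mp hV
  refine ⟨min δX (min δU δV), lt_min hδX (lt_min hδU hδV), ?_, fun y hy hs => ?_, fun y hy hs => ?_⟩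
  · exact tube_subset_cthickening.trans <|
      (Metric.cthickening_mono (min_le_left _ _) _).trans hsubX
  · exact hsubU <| Metric.closedBall_subset_closedBall
      ((min_le_right _ _).trans (min_le_left _ _)) (mem_closedBall_of_mem_tube_of_eq_zero hy hs)
  · exact hsubV <| Metric.closedBall_subset_closedBall
      ((min_le_right _ _).trans (min_le_right _ _)) (mem_closedBall_of_mem_tube_of_eq_one hy hs)

theorem tubeBarrier_add_smul (hsd : s d = 1) (t : ℝ) :
    tubeBarrier s a d α β ε K (a + t • d) = α + (β - α) * t + ε * (t * (1 - t)) := by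
  simp [tubeBarrier, hsd, transversal_self hsd]

theorem affine_le_tubeBarrier (hε : 0 ≤ ε) {y : E} (hs : s (y - a) ∈ Icc (0 : ℝ) 1) :
    α + (β - α) * s (y - a) + K * ‖transversal s d (y - a)‖ ^ 2 ≤
      tubeBarrier s a d α β ε K y := by
  have : 0 ≤ ε * (s (y - a) * (1 - s (y - a))) :=
    mul_nonneg hε (mul_nonneg hs.1 (sub_nonneg.mpr hs.2))
  unfold tubeBarrier
  linarith

theorem le_tubeBarrier_of_mem_frontier {u : E → EReal} {B : ℝ} (hδ : 0 < δ) (hε : 0 ≤ ε)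
    (hB : ∀ y ∈ tube s a d δ, u y ≤ B)
    (hα : ∀ y ∈ tube s a d δ, s (y - a) = 0 → u y ≤ α)
    (hβ : ∀ y ∈ tube s a d δ, s (y - a) = 1 → u y ≤ β)
    {y : E} (hy : y ∈ frontier (tube s a d δ)) :
    u y ≤ tubeBarrier s a d α β ε (|B - min α β| / δ ^ 2) y := by
  set K := |B - min α β| / δ ^ 2
  obtain ⟨hyT, hside⟩ := mem_tube_of_mem_frontier hy
  have haffine := affine_le_tubeBarrier (d := d) (α := α) (β := β) (K := K) hε hyT.1
  have hK : 0 ≤ K * ‖transversal s d (y - a)‖ ^ 2 := by positivity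
  rcases hside with h0 | h1 | hp
  · refine (hα y hyT h0).trans (EReal.coe_le_coe ?_)
    rw [h0] at haffine
    linarith
  · refine (hβ y hyT h1).trans (EReal.coe_le_coe ?_)
    rw [h1] at haffine
    linarith
  · refine (hB y hyT).trans (EReal.coe_le_coe ?_)
    have hmin : min α β ≤ α + (β - α) * s (y - a) := by
      have := Convex.min_le_combo α β (sub_nonneg.mpr hyT.1.2) hyT.1.1 (sub_add_cancel _ _)
      simp only [smul_eq_mul] at this
      linarith
    have hKδ : K * ‖transversal s d (y - a)‖ ^ 2 = |B - min α β| := by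
      rw [hp]
      exact div_mul_cancel₀ _ (by positivity)
    linarith [le_abs_self (B - min α β)]

end Tube

section Barrier

variable {E : Type*} [NormedAddCommGroup E] [InnerProductSpace ℝ E]
  {s : E →L[ℝ] ℝ} {a d : E} {α β δ ε K : ℝ}

theorem contDiff_tubeBarrier : ContDiff ℝ 2 (tubeBarrier s a d α β ε K) := by
  have hp : ContDiff ℝ 2 fun y => ‖transversal s d (y - a)‖ ^ 2 :=
    ContDiff.norm_sq ℝ (by fun_prop)
  unfold tubeBarrier
  fun_prop

theorem sndFDeriv_tubeBarrier (hsd : s d = 1) (y : E) :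
    fderiv ℝ (fderiv ℝ (tubeBarrier s a d α β ε K)) y d d = -(2 * ε) := by
  refine tendsto_nhds_unique
    (tendsto_secondDifference_of_contDiffAt contDiff_tubeBarrier.contDiffAt d)
    (tendsto_const_nhds.congr' ?_)
  filter_upwards [self_mem_nhdsWithin] with t ht
  rw [eq_div_iff (pow_ne_zero 2 ht)]
  have hadd : y + t • d - a = (y - a) + t • d := by abel
  have hsub : y - t • d - a = (y - a) - t • d := by abel
  simp only [tubeBarrier, hadd, hsub, map_add, map_sub _ (y - a), map_smul, hsd,
    transversal_self hsd, smul_zero, add_zero, sub_zero, smul_eq_mul, mul_one]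
  ring

variable [FiniteDimensional ℝ E] {X : Set E} {u : E → EReal}

theorem PSubharmonicOn.le_affine_of_tube (hu : PSubharmonicOn (tube s a d δ) u)
    (husc : UpperSemicontinuousOn u (tube s a d δ)) (hut : ∀ x ∈ tube s a d δ, u x < ⊤)
    (hsd : s d = 1) (hδ : 0 < δ)
    (hα : ∀ y ∈ tube s a d δ, s (y - a) = 0 → u y ≤ α)
    (hβ : ∀ y ∈ tube s a d δ, s (y - a) = 1 → u y ≤ β)
    {t : ℝ} (ht : t ∈ Icc (0 : ℝ) 1) :
    u (a + t • d) ≤ (α + (β - α) * t : ℝ) := by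
  have hmem : a + t • d ∈ tube s a d δ := add_smul_mem_tube hsd hδ.le ht
  obtain ⟨B, hB⟩ : ∃ B : ℝ, ∀ y ∈ tube s a d δ, u y ≤ B := by
    obtain ⟨z, hz, hmax⟩ := husc.exists_isMaxOn ⟨_, hmem⟩ isCompact_tube
    obtain ⟨B, hB, -⟩ := EReal.lt_iff_exists_real_btwn.mp (hut z hz)
    exact ⟨B, fun y hy => (hmax hy).trans hB.le⟩
  have hbarrier : ∀ ε > 0, u (a + t • d) ≤ (α + (β - α) * t + ε * (t * (1 - t)) : ℝ) := by
    intro ε hε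
    rw [← tubeBarrier_add_smul hsd t (a := a) (K := |B - min α β| / δ ^ 2)]
    exact (hu.mono interior_subset).le_of_le_on_frontier husc hut isCompact_tube
      contDiff_tubeBarrier.continuous.continuousOn contDiff_tubeBarrier.contDiffOn
      (fun y _ => ⟨d, by rw [sndFDeriv_tubeBarrier hsd]; linarith⟩)
      (fun y hy => le_tubeBarrier_of_mem_frontier hδ hε.le hB hα hβ hy) hmem
  refine EReal.le_of_forall_lt_iff_le.mp fun r hr => ?_
  have hr : 0 < r - (α + (β - α) * t) := sub_pos.mpr (EReal.coe_lt_coe_iff.mp hr)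
  refine (hbarrier _ hr).trans (EReal.coe_le_coe ?_)
  nlinarith [mul_nonneg hr.le (sq_nonneg t), mul_nonneg hr.le (sub_nonneg.mpr ht.2)]

theorem PSubharmonicOn.le_combo_of_lt (hX : IsOpen X) (hXc : Convex ℝ X)
    (husc : UpperSemicontinuousOn u X) (hut : ∀ x ∈ X, u x < ⊤) (hu : PSubharmonicOn X u)
    {x y : E} (hx : x ∈ X) (hy : y ∈ X) (hα : u x < α) (hβ : u y < β)
    {p q : ℝ} (hp : 0 ≤ p) (hq : 0 ≤ q) (hpq : p + q = 1) :
    u (p • x + q • y) ≤ (p * α + q * β : ℝ) := by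
  rcases eq_or_ne x y with rfl | hxy
  · rw [Convex.combo_self hpq]
    have hmin : u x ≤ (min α β : ℝ) := by
      rw [EReal.coe_strictMono.monotone.map_min]
      exact le_min hα.le hβ.le
    exact hmin.trans (EReal.coe_le_coe (Convex.min_le_combo α β hp hq hpq))
  obtain ⟨s, hs⟩ := SeparatingDual.exists_eq_one (R := ℝ) (sub_ne_zero.mpr hxy.symm)
  have hlt_nhds {z : E} (hz : z ∈ X) {γ : ℝ} (hγ : u z < γ) : {w | u w < γ} ∈ 𝓝 z :=
    hX.nhdsWithin_eq hz ▸ husc z hz γ hγ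
  have hend : x + (y - x) = y := add_sub_cancel x y
  obtain ⟨δ, hδ, hTX, hTx, hTy⟩ := exists_pos_tube_subset (s := s) (a := x) (d := y - x) hX
    (by rw [hend]; exact hXc.segment_subset hx hy) (hlt_nhds hx hα)
    (by rw [hend]; exact hlt_nhds hy hβ)
  have hle := (hu.mono hTX).le_affine_of_tube (husc.mono hTX) (fun z hz => hut z (hTX hz)) hs hδ
    (fun z hz h => (hTx z hz h).le) (fun z hz h => (hTy z hz h).le)
    (⟨hq, by linarith⟩ : q ∈ Icc (0 : ℝ) 1)
  obtain rfl : p = 1 - q := by linarith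
  convert hle using 2
  · module
  · ring

theorem PSubharmonicOn.ne_bot (hX : IsOpen X) (hXc : Convex ℝ X)
    (husc : UpperSemicontinuousOn u X) (hut : ∀ x ∈ X, u x < ⊤) (hu : PSubharmonicOn X u)
    {x y : E} (hx : x ∈ X) (hy : y ∈ X) (huy : u y ≠ ⊥) : u x ≠ ⊥ := by
  intro hux
  have hbeyond : ∀ᶠ c : ℝ in 𝓝[>] 1, AffineMap.homothety x c y ∈ X :=
    nhdsWithin_le_nhds <|
      eventually_homothety_mem_of_mem_interior ℝ x (hX.interior_eq.symm ▸ hy)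
  obtain ⟨c, hzX, hc⟩ := (hbeyond.and self_mem_nhdsWithin).exists
  have hc_pos : 0 < c := zero_lt_one.trans hc
  have hc_inv : c⁻¹ < 1 := inv_lt_one_of_one_lt₀ hc
  have hyz : (1 - c⁻¹) • x + c⁻¹ • AffineMap.homothety x c y = y := by
    rw [AffineMap.homothety_apply, vsub_eq_sub, vadd_eq_add, smul_add, smul_smul,
      inv_mul_cancel₀ hc_pos.ne']
    module
  obtain ⟨β, hβ, -⟩ := EReal.lt_iff_exists_real_btwn.mp (hut _ hzX)
  refine huy (le_bot_iff.mp (EReal.le_of_forall_lt_iff_le.mp fun r _ => ?_))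
  have hle := hu.le_combo_of_lt hX hXc husc hut hx hzX
    (α := (r - c⁻¹ * β) / (1 - c⁻¹)) (hux ▸ EReal.bot_lt_coe _) hβ
    (sub_nonneg.mpr hc_inv.le) (inv_nonneg.mpr hc_pos.le) (sub_add_cancel _ _)
  rwa [hyz, mul_div_cancel₀ _ (sub_pos.mpr hc_inv).ne', sub_add_cancel] at hle

theorem PSubharmonicOn.convexOn_toReal (hX : IsOpen X) (hXc : Convex ℝ X)
    (husc : UpperSemicontinuousOn u X) (hut : ∀ x ∈ X, u x < ⊤) (hu : PSubharmonicOn X u)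
    (hbot : ∀ x ∈ X, u x ≠ ⊥) : ConvexOn ℝ X fun x => (u x).toReal := by
  refine ⟨hXc, fun x hx y hy p q hp hq hpq => le_of_forall_pos_le_add fun e he => ?_⟩
  have hcoe (z : E) (hz : z ∈ X) : ((u z).toReal : EReal) = u z :=
    EReal.coe_toReal (hut z hz).ne (hbot z hz)
  have hlt (z : E) (hz : z ∈ X) : u z < ((u z).toReal + e : ℝ) := by
    conv_lhs => rw [← hcoe z hz]
    exact EReal.coe_lt_coe (lt_add_of_pos_right _ he)
  have hle := hu.le_combo_of_lt hX hXc husc hut hx hy (hlt x hx) (hlt y hy) hp hq hpq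
  rw [← hcoe _ (hXc hx hy hp hq hpq), EReal.coe_le_coe_iff] at hle
  calc (u (p • x + q • y)).toReal
      ≤ p * ((u x).toReal + e) + q * ((u y).toReal + e) := hle
    _ = p * (u x).toReal + q * (u y).toReal + (p + q) * e := by ring
    _ = p • (u x).toReal + q • (u y).toReal + e := by
      rw [hpq, one_mul, smul_eq_mul, smul_eq_mul]

end Barrier

theorem statement_13_general {E : Type*} [NormedAddCommGroup E] [InnerProductSpace ℝ E]
    [FiniteDimensional ℝ E] {X : Set E} (hX : IsOpen X) (hXc : Convex ℝ X) {u : E → EReal}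
    (husc : UpperSemicontinuousOn u X) (hut : ∀ x ∈ X, u x < ⊤) (hne : ∃ x ∈ X, u x ≠ ⊥) :
    PSubharmonicOn X u ↔ (∀ x ∈ X, u x ≠ ⊥) ∧ ConvexOn ℝ X fun x => (u x).toReal := by
  constructor
  · intro hu
    obtain ⟨y, hy, huy⟩ := hne
    have hbot : ∀ x ∈ X, u x ≠ ⊥ := fun x hx => hu.ne_bot hX hXc husc hut hx hy huy
    exact ⟨hbot, hu.convexOn_toReal hX hXc husc hut hbot⟩
  · rintro ⟨hbot, hconv⟩
    exact .of_convexOn_toReal hX hbot hconv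

section Hessian

variable {n : ℕ} {φ : En n → ℝ} {x : En n}

theorem dotProduct_hess_mulVec (φ : En n → ℝ) (x v : En n) :
    star v.ofLp ⬝ᵥ (hess φ x).mulVec v.ofLp = fderiv ℝ (fderiv ℝ φ) x v v := by
  have hv : v = ∑ i, v i • EuclideanSpace.single i (1 : ℝ) := by
    ext j
    simp [Pi.single_apply]
  conv_rhs => rw [hv]
  simp only [dotProduct, Matrix.mulVec, hess, Matrix.of_apply, iteratedFDeriv_two_apply,
    Matrix.cons_val_zero, Matrix.cons_val_one, star_trivial, Finset.mul_sum, map_sum, map_smul,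
    _root_.sum_apply, _root_.smul_apply, smul_eq_mul]
  rw [Finset.sum_comm]
  refine Finset.sum_congr rfl fun i _ => Finset.sum_congr rfl fun j _ => ?_
  ring

theorem isHermitian_hess (hφ : ContDiffAt ℝ 2 φ x) : (hess φ x).IsHermitian := by
  ext i j
  simpa [hess, iteratedFDeriv_two_apply] using
    hφ.isSymmSndFDerivAt (by simp) (EuclideanSpace.single j 1) (EuclideanSpace.single i 1)

theorem posSemidef_hess_iff (hφ : ContDiffAt ℝ 2 φ x) :
    (hess φ x).PosSemidef ↔ ∀ v, 0 ≤ fderiv ℝ (fderiv ℝ φ) x v v := by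
  simp only [Matrix.posSemidef_iff_dotProduct_mulVec, isHermitian_hess hφ, true_and,
    ← dotProduct_hess_mulVec]
  exact (WithLp.equiv 2 (Fin n → ℝ)).symm.forall_congr fun _ => Iff.rfl

theorem isUpperContactHessian_iff {X : Set (En n)} (hX : IsOpen X) {u : En n → EReal}
    (hx : x ∈ X) {A : SymMat n} :
    IsUpperContactHessian X u x A ↔
      ∃ φ, IsUpperContactAt u φ x ∧ (A : Matrix (Fin n) (Fin n) ℝ) = hess φ x := by
  constructor
  · rintro ⟨φ, V, hV, hxV, -, hφ, hle, heq, hA⟩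
    exact ⟨φ, ⟨hφ.contDiffAt (hV.mem_nhds hxV),
      eventually_of_mem (hV.mem_nhds hxV) hle, heq⟩, hA⟩
  · rintro ⟨φ, hφ, hA⟩
    have hnear := (hφ.contDiffAt.eventually (by simp)).and
      (hφ.eventually_le.and (hX.eventually_mem hx))
    obtain ⟨V, hVnear, hV, hxV⟩ := eventually_nhds_iff.mp hnear
    exact ⟨φ, V, hV, hxV, fun y hy => (hVnear y hy).2.2,
      fun y hy => (hVnear y hy).1.contDiffWithinAt, fun y hy => (hVnear y hy).2.1, hφ.eq, hA⟩

theorem forall_isUpperContactHessian_psd_iff {X : Set (En n)} (hX : IsOpen X)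
    {u : En n → EReal} :
    (∀ x ∈ X, ∀ A : SymMat n, IsUpperContactHessian X u x A → PSD A) ↔ PSubharmonicOn X u := by
  refine forall₂_congr fun x hx => ⟨fun h φ hφ => ?_, fun h A hA => ?_⟩
  · exact (posSemidef_hess_iff hφ.contDiffAt).mp <| h ⟨hess φ x, isHermitian_hess hφ.contDiffAt⟩ <|
      (isUpperContactHessian_iff hX hx).mpr ⟨φ, hφ, rfl⟩
  · obtain ⟨φ, hφ, hAφ⟩ := (isUpperContactHessian_iff hX hx).mp hA
    rw [PSD, hAφ, posSemidef_hess_iff hφ.contDiffAt]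
    exact h φ hφ

end Hessian

/-- The `𝒫`-subharmonic functions (not identically `-∞`) on an open convex set are
exactly the real-valued convex functions. -/
theorem statement_13 {n : ℕ} (X : Set (En n)) (hX : IsOpen X) (hXc : Convex ℝ X)
    (u : En n → EReal) (husc : UpperSemicontinuousOn u X) (hut : ∀ x ∈ X, u x < ⊤)
    (hne : ∃ x ∈ X, u x ≠ ⊥) :
    (∀ x ∈ X, ∀ A : SymMat n, IsUpperContactHessian X u x A → PSD A) ↔
    ((∀ x ∈ X, u x ≠ ⊥) ∧ ConvexOn ℝ X fun x => (u x).toReal) := by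
  rw [forall_isUpperContactHessian_psd_iff hX]
  exact statement_13_general hX hXc husc hut hne

end
end

section
/- Constant coefficient subharmonic addition theorem: Let M ⊂ J² be a monotonicity cone subequation and F ⊂ J² a constant coefficient subequation which is M-monotone, i.e. F + M ⊂ F. Then for every open set X ⊂ ℝⁿ, if u ∈ USC(X) is F-subharmonic on X and v ∈ USC(X) is \widetilde{F}-subharmonic on X, then u + v ∈ USC(X) is \widetilde{M}-subharmonic on X. -/
open Set Filter Topology Bornology
open scoped Pointwise

noncomputable section

/-- `J ∈ J^{2,+}_x u`: `J = (φ(x), Dφ(x), D²φ(x))` for some `C²` function `φ` defined near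
`x` (inside `X`) with `u ≤ φ` near `x` and `u(x) = φ(x)`. -/
def IsUpperTestJet {n : ℕ} (X : Set (En n)) (u : En n → EReal) (x : En n) (J : Jet n) : Prop :=
  ∃ φ : En n → ℝ, ∃ V : Set (En n), IsOpen V ∧ x ∈ V ∧ V ⊆ X ∧ ContDiffOn ℝ 2 φ V ∧
    (∀ y ∈ V, u y ≤ (φ y : EReal)) ∧ u x = (φ x : EReal) ∧
    J.1 = φ x ∧ J.2.1 = gradient φ x ∧ (J.2.2 : Matrix (Fin n) (Fin n) ℝ) = hess φ x

/-- `J ∈ J^{2,-}_x u`: `J = (φ(x), Dφ(x), D²φ(x))` for some `C²` function `φ` defined near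
`x` (inside `X`) with `u ≥ φ` near `x` and `u(x) = φ(x)`. -/
def IsLowerTestJet {n : ℕ} (X : Set (En n)) (u : En n → EReal) (x : En n) (J : Jet n) : Prop :=
  ∃ φ : En n → ℝ, ∃ V : Set (En n), IsOpen V ∧ x ∈ V ∧ V ⊆ X ∧ ContDiffOn ℝ 2 φ V ∧
    (∀ y ∈ V, (φ y : EReal) ≤ u y) ∧ u x = (φ x : EReal) ∧
    J.1 = φ x ∧ J.2.1 = gradient φ x ∧ (J.2.2 : Matrix (Fin n) (Fin n) ℝ) = hess φ x

/-- `u ∈ USC(X)`: upper semicontinuous on `X` with values in `[-∞, ∞)`. -/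
def USCOn {n : ℕ} (u : En n → EReal) (X : Set (En n)) : Prop :=
  UpperSemicontinuousOn u X ∧ ∀ x ∈ X, u x < ⊤

/-- `u ∈ LSC(X)`: lower semicontinuous on `X` with values in `(-∞, ∞]`. -/
def LSCOn {n : ℕ} (u : En n → EReal) (X : Set (En n)) : Prop :=
  LowerSemicontinuousOn u X ∧ ∀ x ∈ X, ⊥ < u x

/-- A constant coefficient subequation `F ⊆ J²`: closed, `F = closure (interior F)`, and
satisfying the positivity property (P) and negativity property (N). -/
def IsCCSubequation {n : ℕ} (F : Set (Jet n)) : Prop :=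
  IsClosed F ∧ F = closure (interior F) ∧
  (∀ J ∈ F, ∀ P : SymMat n, PSD P → (J.1, J.2.1, J.2.2 + P) ∈ F) ∧
  (∀ J ∈ F, ∀ s : ℝ, s ≤ 0 → (J.1 + s, J.2.1, J.2.2) ∈ F)

/-- A monotonicity cone subequation: a constant coefficient subequation which is also a
convex cone with vertex at the origin. -/
def IsMonotonicityConeSubequation {n : ℕ} (M : Set (Jet n)) : Prop :=
  IsCCSubequation M ∧ Convex ℝ M ∧ (0 : Jet n) ∈ M ∧
  (∀ t : ℝ, 0 ≤ t → ∀ J ∈ M, t • J ∈ M)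

/-- The Dirichlet dual `(−interior S)ᶜ` of a constant coefficient set `S ⊆ J²`. -/
def dualJ {n : ℕ} (S : Set (Jet n)) : Set (Jet n) := (-(interior S))ᶜ

/-- `u` is `S`-subharmonic on `X` for a constant coefficient set `S ⊆ J²`. -/
def CCSubharmonicOn {n : ℕ} (S : Set (Jet n)) (u : En n → EReal) (X : Set (En n)) : Prop :=
  ∀ x ∈ X, ∀ J : Jet n, IsUpperTestJet X u x J → J ∈ S

/-!
If `F + G ⊆ H`, the sum of an `F`-subharmonic and a `G`-subharmonic function is `H`-subharmonic;
the theorem is the case `G = F̃`, `H = M̃`, since `F + M ⊆ F` dualizes to `F + F̃ ⊆ M̃`.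

To find upper test jets of `u` and `v` adding up to nearly a given jet of `u + v`, subtract the test
function and perturb it so that `u + v` has a strict maximum `0` at the point, and replace `u`, `v`
by their sup-convolutions, which lie above paraboloids of a fixed opening. At a point where
`w = uᴸ + vᴸ` minus a linear function is maximal, both sup-convolutions are squeezed between
paraboloids, so their gradients are Lipschitz on the contact set of `w`. This set has positive
measure, because its image under the gradient of `w` contains a ball of slopes; hence by Rademacher
and Lebesgue density both sup-convolutions have second-order expansions at one of its points
(Jensen's lemma), and there the second derivatives add up to a nonpositive form. Expansions of the
sup-convolutions transfer to upper test jets of `u` and `v` at the points where the suprema are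
attained.
-/

section SecondOrder

variable {E : Type*} [NormedAddCommGroup E] [InnerProductSpace ℝ E]

/-- Second-order (Peano) expansion of `w` at `y`, with slope `p` and second derivative `D`. Only the
quadratic form `x ↦ ⟪D x, x⟫` matters, so `D` is not required to be symmetric. -/
def HasQuadraticExpansionAt (w : E → ℝ) (p : E) (D : E →L[ℝ] E) (y : E) : Prop :=
  (fun x => w (y + x) - w y - inner ℝ p x - inner ℝ (D x) x / 2) =o[𝓝 0] fun x => ‖x‖ ^ 2

/-- Near `a`, `u` lies below the quadratic function with value `α`, slope `p` and second derivative
`D` at `a`, with equality at `a`. As for `HasQuadraticExpansionAt`, `D` need not be symmetric. -/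
def HasUpperQuadraticAt (u : E → EReal) (a : E) (α : ℝ) (p : E) (D : E →L[ℝ] E) : Prop :=
  u a = α ∧ ∀ᶠ x in 𝓝 (0 : E), u (a + x) ≤ ((α + inner ℝ p x + inner ℝ (D x) x / 2 : ℝ) : EReal)

/-- The graph of `w` is squeezed, at every point `y` of `S`, between two paraboloids of opening `C`
with common slope `p y`. -/
def HasParaboloidsOn (w : E → ℝ) (p : E → E) (C : ℝ) (S : Set E) : Prop :=
  ∀ y ∈ S, ∀ z, |w z - w y - inner ℝ (p y) (z - y)| ≤ C * ‖z - y‖ ^ 2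

theorem inner_add_smul_id_apply (D : E →L[ℝ] E) (κ : ℝ) (x : E) :
    inner ℝ ((D + κ • ContinuousLinearMap.id ℝ E) x) x = inner ℝ (D x) x + κ * ‖x‖ ^ 2 := by
  simp only [add_apply, smul_apply, ContinuousLinearMap.id_apply, inner_add_left,
    real_inner_smul_left, real_inner_self_eq_norm_sq]

namespace HasQuadraticExpansionAt

variable {w w' : E → ℝ} {p p' y : E} {D D' : E →L[ℝ] E}

theorem add (h : HasQuadraticExpansionAt w p D y) (h' : HasQuadraticExpansionAt w' p' D' y) :
    HasQuadraticExpansionAt (w + w') (p + p') (D + D') y := by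
  refine (Asymptotics.IsLittleO.add h h').congr_left fun x => ?_
  simp only [Pi.add_apply, add_apply, inner_add_left]
  ring

theorem inner_nonpos_of_le (h : HasQuadraticExpansionAt w p D y)
    (hle : ∀ z, w z ≤ w y + inner ℝ p (z - y)) (x : E) : inner ℝ (D x) x ≤ 0 := by
  refine le_of_forall_pos_le_add fun ε hε => ?_
  have hc : 0 < ε / (2 * (‖x‖ ^ 2 + 1)) := by positivity
  have hline : Tendsto (fun t : ℝ => t • x) (𝓝[>] 0) (𝓝 0) :=
    tendsto_nhdsWithin_of_tendsto_nhds
      ((continuous_id.smul continuous_const).tendsto' 0 0 (zero_smul ℝ x))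
  obtain ⟨t, hbound, ht : 0 < t⟩ :=
    ((hline.eventually (h.def hc)).and self_mem_nhdsWithin).exists
  have hcontact : w (y + t • x) - w y - inner ℝ p (t • x) ≤ 0 := by
    have := hle (y + t • x)
    rw [add_sub_cancel_left] at this
    linarith
  have hhom : inner ℝ (D (t • x)) (t • x) = t ^ 2 * inner ℝ (D x) x := by
    rw [map_smul, real_inner_smul_left, real_inner_smul_right]
    ring
  have hnorm : ε / (2 * (‖x‖ ^ 2 + 1)) * ‖‖t • x‖ ^ 2‖ ≤ t ^ 2 * (ε / 2) := by
    rw [norm_pow, norm_norm, norm_smul, mul_pow, Real.norm_eq_abs, sq_abs]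
    have : ‖x‖ ^ 2 / (‖x‖ ^ 2 + 1) ≤ 1 := (div_le_one (by positivity)).2 (by linarith)
    calc ε / (2 * (‖x‖ ^ 2 + 1)) * (t ^ 2 * ‖x‖ ^ 2)
        = t ^ 2 * (ε / 2) * (‖x‖ ^ 2 / (‖x‖ ^ 2 + 1)) := by field_simp
      _ ≤ t ^ 2 * (ε / 2) := mul_le_of_le_one_right (by positivity) this
  rw [hhom] at hbound
  have := (abs_le.1 (hbound.trans hnorm)).1
  have : t ^ 2 * inner ℝ (D x) x ≤ t ^ 2 * ε := by linarith
  linarith [le_of_mul_le_mul_left this (by positivity)]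

end HasQuadraticExpansionAt

theorem eventually_exists_mem_norm_sub_le {S : Set E} {y : E} (hy : y ∈ S)
    (hd : DifferentiableAt ℝ (fun z => Metric.infDist z S) y) {σ : ℝ} (hσ : 0 < σ) :
    ∀ᶠ z in 𝓝 y, ∃ e ∈ S, ‖z - e‖ ≤ σ * ‖z - y‖ := by
  have h0 : Metric.infDist y S = 0 := Metric.infDist_zero_of_mem hy
  -- The distance to `S` is minimal at `y`, so its derivative there vanishes.
  have hmin : IsLocalMin (fun z => Metric.infDist z S) y :=
    Eventually.of_forall fun z => h0.le.trans Metric.infDist_nonneg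
  have hder := hd.hasFDerivAt
  rw [hmin.fderiv_eq_zero, hasFDerivAt_iff_isLittleO] at hder
  filter_upwards [hder.def (half_pos hσ)] with z hz
  simp only [h0, sub_zero, zero_apply, Real.norm_of_nonneg Metric.infDist_nonneg] at hz
  rcases eq_or_ne z y with rfl | hne
  · exact ⟨z, hy, by simp⟩
  have hpos : 0 < ‖z - y‖ := norm_pos_iff.2 (sub_ne_zero.2 hne)
  obtain ⟨e, he, hlt⟩ := (Metric.infDist_lt_iff ⟨y, hy⟩).1
    (hz.trans_lt (mul_lt_mul_of_pos_right (half_lt_self hσ) hpos))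
  exact ⟨e, he, dist_eq_norm z e ▸ hlt.le⟩

theorem eventually_exists_mem_norm_sub_sub_le {p : E → E} {D : E →L[ℝ] E} {S : Set E} {y : E}
    (hp : HasFDerivWithinAt p D S y) (hy : y ∈ S)
    (hd : DifferentiableAt ℝ (fun z => Metric.infDist z S) y) {σ : ℝ} (hσ : 0 < σ) :
    ∀ᶠ z in 𝓝 y, ∃ e ∈ S, ‖z - e‖ ≤ σ * ‖z - y‖ ∧
      ‖p e - p y - D (z - y)‖ ≤ σ * ‖z - y‖ := by
  set s : ℝ := min 1 (σ / (2 + ‖D‖))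
  have hs : 0 < s := by positivity
  have hsσ : s * (2 + ‖D‖) ≤ σ := (le_div_iff₀ (by positivity)).1 (min_le_right _ _)
  obtain ⟨r, hr, hpr⟩ := Metric.eventually_nhds_iff.1
    (eventually_nhdsWithin_iff.1 ((hasFDerivWithinAt_iff_isLittleO.1 hp).def hs))
  filter_upwards [eventually_exists_mem_norm_sub_le hy hd hs,
    Metric.ball_mem_nhds y (half_pos hr)] with z ⟨e, heS, hez⟩ hzr
  rw [Metric.mem_ball, dist_eq_norm] at hzr
  have hzy := norm_nonneg (z - y)
  have hey : ‖e - y‖ ≤ 2 * ‖z - y‖ := by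
    calc ‖e - y‖ = ‖(z - y) - (z - e)‖ := by congr 1; abel
      _ ≤ ‖z - y‖ + ‖z - e‖ := norm_sub_le _ _
      _ ≤ ‖z - y‖ + 1 * ‖z - y‖ := by gcongr; exact hez.trans (by gcongr; exact min_le_left _ _)
      _ = 2 * ‖z - y‖ := by ring
  have hsz : s * (2 + ‖D‖) * ‖z - y‖ ≤ σ * ‖z - y‖ := by gcongr
  have hDs := mul_nonneg (mul_nonneg hs.le (norm_nonneg D)) hzy
  refine ⟨e, heS, by linarith [mul_nonneg hs.le hzy], ?_⟩
  calc ‖p e - p y - D (z - y)‖ = ‖(p e - p y - D (e - y)) - D (z - e)‖ := by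
        congr 1
        rw [sub_sub (p e - p y) (D (e - y)), ← map_add]
        congr 2
        abel
    _ ≤ ‖p e - p y - D (e - y)‖ + ‖D (z - e)‖ := norm_sub_le _ _
    _ ≤ s * (2 * ‖z - y‖) + ‖D‖ * (s * ‖z - y‖) := by
        gcongr
        · exact (hpr (by rw [dist_eq_norm]; linarith) heS).trans (by gcongr)
        · exact D.le_opNorm_of_le hez
    _ = s * (2 + ‖D‖) * ‖z - y‖ := by ring
    _ ≤ σ * ‖z - y‖ := hsz

theorem abs_sub_sub_half_le_of_abs_increment_le {f : ℝ → ℝ} {a b ε : ℝ} {N : ℕ} (hN : 0 < N)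
    (hf : ∀ t ∈ Icc (0 : ℝ) 1,
      |f (t + (N : ℝ)⁻¹) - f t - (N : ℝ)⁻¹ * (a + t * b)| ≤ ε * (N : ℝ)⁻¹ ^ 2) :
    |f 1 - f 0 - a - b / 2| ≤ (ε + |b|) / N := by
  have hN0 : (0 : ℝ) < N := Nat.cast_pos.2 hN
  set s : ℝ := (N : ℝ)⁻¹ with hs
  set ψ : ℕ → ℝ := fun k => f (k * s) - k * s * a - (k * s) ^ 2 / 2 * b with hψ
  have hstep : ∀ {k}, k < N → dist (ψ k) (ψ (k + 1)) ≤ (ε + |b|) * s ^ 2 := by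
    intro k hk
    have hk1 : k * s ∈ Icc (0 : ℝ) 1 := by
      refine ⟨by positivity, ?_⟩
      rw [hs, ← div_eq_mul_inv]
      exact div_le_one_of_le₀ (by exact_mod_cast hk.le) hN0.le
    have hψk : ψ (k + 1) - ψ k
        = (f (k * s + s) - f (k * s) - s * (a + k * s * b)) + -(s ^ 2 / 2 * b) := by
      simp only [hψ, Nat.cast_add, Nat.cast_one, add_mul, one_mul]
      ring
    rw [dist_comm, Real.dist_eq, hψk]
    calc |(f (k * s + s) - f (k * s) - s * (a + k * s * b)) + -(s ^ 2 / 2 * b)|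
        ≤ ε * s ^ 2 + |-(s ^ 2 / 2 * b)| := (abs_add_le _ _).trans (by gcongr; exact hf _ hk1)
      _ = ε * s ^ 2 + s ^ 2 / 2 * |b| := by rw [abs_neg, abs_mul, abs_of_nonneg (by positivity)]
      _ ≤ (ε + |b|) * s ^ 2 := by nlinarith [mul_nonneg (sq_nonneg s) (abs_nonneg b)]
  have hψ₀ : ψ N - ψ 0 = f 1 - f 0 - a - b / 2 := by
    simp only [hψ, hs, mul_inv_cancel₀ hN0.ne', Nat.cast_zero, zero_mul]
    ring
  calc |f 1 - f 0 - a - b / 2| = dist (ψ 0) (ψ N) := by rw [dist_comm, Real.dist_eq, hψ₀]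
    _ ≤ ∑ _k ∈ Finset.range N, (ε + |b|) * s ^ 2 := dist_le_range_sum_of_dist_le N hstep
    _ = (ε + |b|) / N := by
        rw [Finset.sum_const, Finset.card_range, nsmul_eq_mul, hs]
        field_simp

namespace HasParaboloidsOn

variable {w : E → ℝ} {p : E → E} {C : ℝ} {S : Set E}

theorem abs_increment_le (h : HasParaboloidsOn w p C S) (hC : 0 ≤ C) {e z x : E} (he : e ∈ S)
    {r : ℝ} (hz : ‖z - e‖ ≤ r) (hx : ‖x‖ ≤ r) :
    |w (z + x) - w z - inner ℝ (p e) x| ≤ 5 * C * r ^ 2 := by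
  have hzx : ‖z + x - e‖ ≤ 2 * r := by
    calc ‖z + x - e‖ = ‖(z - e) + x‖ := by congr 1; abel
      _ ≤ ‖z - e‖ + ‖x‖ := norm_add_le _ _
      _ ≤ 2 * r := by linarith
  have h₁ : |w (z + x) - w e - inner ℝ (p e) (z + x - e)| ≤ C * (2 * r) ^ 2 :=
    (h e he _).trans (by gcongr)
  have h₂ : |w z - w e - inner ℝ (p e) (z - e)| ≤ C * r ^ 2 := (h e he _).trans (by gcongr)
  calc |w (z + x) - w z - inner ℝ (p e) x|
      = |(w (z + x) - w e - inner ℝ (p e) (z + x - e)) - (w z - w e - inner ℝ (p e) (z - e))| := by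
        simp only [inner_sub_right, inner_add_right]
        congr 1
        ring
    _ ≤ C * (2 * r) ^ 2 + C * r ^ 2 := (abs_sub _ _).trans (add_le_add h₁ h₂)
    _ = 5 * C * r ^ 2 := by ring

theorem lipschitzOnWith (h : HasParaboloidsOn w p C S) (hC : 0 ≤ C) :
    LipschitzOnWith (6 * C).toNNReal p S := by
  refine LipschitzOnWith.of_dist_le_mul fun y hy y' hy' => ?_
  rw [Real.coe_toNNReal _ (by positivity), dist_eq_norm, dist_eq_norm]
  rcases eq_or_ne y y' with rfl | hne
  · simp
  rcases eq_or_ne (p y - p y') 0 with hp | hp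
  · rw [hp, norm_zero]
    positivity
  have hd : 0 < ‖y - y'‖ := norm_pos_iff.2 (sub_ne_zero.2 hne)
  have hp' : 0 < ‖p y - p y'‖ := norm_pos_iff.2 hp
  -- Compare the two paraboloids at distance `‖y - y'‖` from `y'` in the direction `p y - p y'`.
  set x : E := (‖y - y'‖ / ‖p y - p y'‖) • (p y - p y') with hx
  have hxnorm : ‖x‖ = ‖y - y'‖ := by
    rw [hx, norm_smul, Real.norm_of_nonneg (by positivity), div_mul_cancel₀ _ hp'.ne']
  have hinner : inner ℝ (p y) x - inner ℝ (p y') x = ‖y - y'‖ * ‖p y - p y'‖ := by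
    rw [← inner_sub_left, hx, inner_smul_right, real_inner_self_eq_norm_sq]
    field_simp
  have h₁ := abs_le.1 (h.abs_increment_le hC hy (norm_sub_rev y' y).le hxnorm.le)
  have h₂ := h y' hy' (y' + x)
  rw [add_sub_cancel_left, hxnorm] at h₂
  have h₂ := abs_le.1 h₂
  refine le_of_mul_le_mul_left ?_ hd
  linarith

theorem eventually_abs_increment_le (h : HasParaboloidsOn w p C S) (hC : 0 ≤ C) {y : E}
    {D : E →L[ℝ] E} (hp : HasFDerivWithinAt p D S y) (hy : y ∈ S)
    (hd : DifferentiableAt ℝ (fun z => Metric.infDist z S) y) {s : ℝ} (hs : 0 < s) :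
    ∀ᶠ x in 𝓝 (0 : E), ∀ t ∈ Icc (0 : ℝ) 1,
      |w (y + (t + s) • x) - w (y + t • x) - s * inner ℝ (p y + t • D x) x|
        ≤ (5 * C + 1) * (s * ‖x‖) ^ 2 := by
  obtain ⟨r, hr, hnear⟩ := Metric.eventually_nhds_iff.1
    (eventually_exists_mem_norm_sub_sub_le hp hy hd hs)
  filter_upwards [Metric.ball_mem_nhds 0 hr] with x hx t ht
  have htx : ‖t • x‖ ≤ ‖x‖ := by
    rw [norm_smul, Real.norm_of_nonneg ht.1]
    exact mul_le_of_le_one_left (norm_nonneg x) ht.2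
  obtain ⟨e, heS, hez, hpe⟩ := hnear (y := y + t • x) (by
    rw [dist_eq_norm, add_sub_cancel_left]
    exact htx.trans_lt (mem_ball_zero_iff.1 hx))
  rw [add_sub_cancel_left] at hez hpe
  have hsx : ‖s • x‖ = s * ‖x‖ := by rw [norm_smul, Real.norm_of_nonneg hs.le]
  have hstx : s * ‖t • x‖ ≤ s * ‖x‖ := by gcongr
  have hw := h.abs_increment_le hC heS (hez.trans hstx) hsx.le
  have hslope : |inner ℝ (p e - p y - D (t • x)) (s • x)| ≤ (s * ‖x‖) ^ 2 := by
    calc |inner ℝ (p e - p y - D (t • x)) (s • x)|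
        ≤ ‖p e - p y - D (t • x)‖ * ‖s • x‖ := abs_real_inner_le_norm _ _
      _ ≤ s * ‖x‖ * (s * ‖x‖) := by rw [hsx]; gcongr; exact hpe.trans hstx
      _ = (s * ‖x‖) ^ 2 := by ring
  calc |w (y + (t + s) • x) - w (y + t • x) - s * inner ℝ (p y + t • D x) x|
      = |(w (y + t • x + s • x) - w (y + t • x) - inner ℝ (p e) (s • x))
          + inner ℝ (p e - p y - D (t • x)) (s • x)| := by
        simp only [add_smul, add_assoc, inner_sub_left, inner_add_left, inner_smul_right, map_smul]
        congr 1
        ring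
    _ ≤ 5 * C * (s * ‖x‖) ^ 2 + (s * ‖x‖) ^ 2 := (abs_add_le _ _).trans (add_le_add hw hslope)
    _ = (5 * C + 1) * (s * ‖x‖) ^ 2 := by ring

/-- `w` itself need not be differentiable off `S`; the expansion is obtained by summing `N`
increments of `w` along the segment from `y` to `y + x`, each estimated from a nearby point of
`S`. -/
theorem hasQuadraticExpansionAt (h : HasParaboloidsOn w p C S) (hC : 0 ≤ C) {y : E}
    {D : E →L[ℝ] E} (hp : HasFDerivWithinAt p D S y) (hy : y ∈ S)
    (hd : DifferentiableAt ℝ (fun z => Metric.infDist z S) y) :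
    HasQuadraticExpansionAt w (p y) D y := by
  refine Asymptotics.isLittleO_iff.2 fun κ hκ => ?_
  obtain ⟨N, hN⟩ := exists_nat_gt ((5 * C + 1 + ‖D‖) / κ)
  have hN0 : (0 : ℝ) < N := lt_of_le_of_lt (by positivity) hN
  filter_upwards [h.eventually_abs_increment_le hC hp hy hd (inv_pos.2 hN0)] with x hx
  have hDx : |inner ℝ (D x) x| ≤ ‖D‖ * ‖x‖ ^ 2 := by
    calc |inner ℝ (D x) x| ≤ ‖D x‖ * ‖x‖ := abs_real_inner_le_norm _ _
      _ ≤ ‖D‖ * ‖x‖ * ‖x‖ := by gcongr; exact D.le_opNorm x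
      _ = ‖D‖ * ‖x‖ ^ 2 := by ring
  have hsum := abs_sub_sub_half_le_of_abs_increment_le (f := fun t => w (y + t • x))
    (a := inner ℝ (p y) x) (b := inner ℝ (D x) x) (ε := (5 * C + 1) * ‖x‖ ^ 2)
    (Nat.cast_pos.1 hN0) fun t ht => by
      have := hx t ht
      rw [inner_add_left, real_inner_smul_left] at this
      exact this.trans_eq (by ring)
  simp only [one_smul, zero_smul, add_zero] at hsum
  calc |w (y + x) - w y - inner ℝ (p y) x - inner ℝ (D x) x / 2|
      ≤ ((5 * C + 1) * ‖x‖ ^ 2 + |inner ℝ (D x) x|) / N := hsum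
    _ ≤ ((5 * C + 1) * ‖x‖ ^ 2 + ‖D‖ * ‖x‖ ^ 2) / N := by gcongr
    _ = (5 * C + 1 + ‖D‖) / N * ‖x‖ ^ 2 := by ring
    _ ≤ κ * ‖x‖ ^ 2 := by gcongr; exact ((div_lt_comm₀ hκ hN0).1 hN).le
    _ = κ * ‖‖x‖ ^ 2‖ := by rw [Real.norm_of_nonneg (sq_nonneg ‖x‖)]

end HasParaboloidsOn

/-- `w` is supported from below at every point `y` by a paraboloid of opening `C` and slope `P y`.
This is semiconvexity of `w`, together with a selection `P` of its subgradients. -/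
def HasLowerParaboloids (w : E → ℝ) (P : E → E) (C : ℝ) : Prop :=
  ∀ y z, w y + inner ℝ (P y) (z - y) - C * ‖z - y‖ ^ 2 ≤ w z

namespace HasLowerParaboloids

variable {w w' : E → ℝ} {P P' : E → E} {C C' : ℝ}

theorem add (h : HasLowerParaboloids w P C) (h' : HasLowerParaboloids w' P' C') :
    HasLowerParaboloids (w + w') (P + P') (C + C') := by
  intro y z
  have := add_le_add (h y z) (h' y z)
  simp only [Pi.add_apply, inner_add_left]
  linarith

theorem convexOn_add_sq (h : HasLowerParaboloids w P C) :
    ConvexOn ℝ univ fun y => w y + C * ‖y‖ ^ 2 := by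
  have hsupport (y z : E) : w y + C * ‖y‖ ^ 2 + inner ℝ (P y + (2 * C) • y) (z - y)
      ≤ w z + C * ‖z‖ ^ 2 := by
    have := h y z
    rw [norm_sub_sq_real] at this
    simp only [inner_add_left, real_inner_smul_left, inner_sub_right, real_inner_self_eq_norm_sq,
      real_inner_comm y z] at this ⊢
    linarith
  refine ⟨convex_univ, fun x _ y _ a b ha hb hab => ?_⟩
  set m : E := a • x + b • y with hm
  have hbalance : a • (x - m) + b • (y - m) = 0 := by
    rw [smul_sub, smul_sub, sub_add_sub_comm, ← add_smul, hab, one_smul, ← hm, sub_self]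
  have hinner := congrArg (inner ℝ (P m + (2 * C) • m)) hbalance
  rw [inner_add_right, inner_smul_right, inner_smul_right, inner_zero_right] at hinner
  have hx := mul_le_mul_of_nonneg_left (hsupport m x) ha
  have hy := mul_le_mul_of_nonneg_left (hsupport m y) hb
  simp only [smul_eq_mul]
  linear_combination hx + hy - hinner - (w m + C * ‖m‖ ^ 2) * hab

theorem continuous [FiniteDimensional ℝ E] (h : HasLowerParaboloids w P C) : Continuous w := by
  have hconv : Continuous fun y => w y + C * ‖y‖ ^ 2 :=
    continuousOn_univ.1 (h.convexOn_add_sq.continuousOn isOpen_univ)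
  exact (hconv.sub (continuous_const.mul (continuous_norm.pow 2))).congr fun y =>
    add_sub_cancel_right _ _

theorem eq_of_le (h : HasLowerParaboloids w P C) {y q : E}
    (hq : ∀ z, w z ≤ w y + inner ℝ q (z - y)) : P y = q := by
  rw [← sub_eq_zero, ← norm_eq_zero]
  set t : ℝ := (|C| + 1)⁻¹ with ht
  have ht0 : 0 < t := by positivity
  have hCt : C * t < 1 := by
    rw [ht, ← div_eq_mul_inv, div_lt_one (by positivity)]
    linarith [le_abs_self C]
  have hcmp := (h y (y + t • (P y - q))).trans (hq _)
  rw [add_sub_cancel_left, norm_smul, Real.norm_of_nonneg ht0.le, inner_smul_right,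
    inner_smul_right] at hcmp
  have hsq : inner ℝ (P y) (P y - q) - inner ℝ q (P y - q) = ‖P y - q‖ ^ 2 := by
    rw [← inner_sub_left, real_inner_self_eq_norm_sq]
  have : t * ‖P y - q‖ ^ 2 * (1 - C * t) ≤ 0 := by linear_combination hcmp - t * hsq
  by_contra hne
  have : 0 < t * ‖P y - q‖ ^ 2 * (1 - C * t) :=
    mul_pos (by positivity) (sub_pos.2 hCt)
  linarith

theorem hasParaboloidsOn (h : HasLowerParaboloids w P C) (h' : HasLowerParaboloids w' P' C) :
    HasParaboloidsOn w P C
      {y | ∀ z, (w + w') z ≤ (w + w') y + inner ℝ ((P + P') y) (z - y)} := by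
  intro y hy z
  have hz := hy z
  simp only [Pi.add_apply, inner_add_left] at hz
  rw [abs_le]
  constructor
  · linarith [h y z]
  · linarith [h' y z]

end HasLowerParaboloids

theorem hausdorffMeasure_finrank_ne_zero_of_ball_subset_image [FiniteDimensional ℝ E]
    [MeasurableSpace E] [BorelSpace E] {g : E → E} {S : Set E} {k : NNReal}
    (hg : LipschitzOnWith k g S) {x : E} {τ : ℝ} (hτ : 0 < τ)
    (hball : Metric.ball x τ ⊆ g '' S) :
    MeasureTheory.Measure.hausdorffMeasure (Module.finrank ℝ E) S ≠ 0 := by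
  intro hS
  have himage := hg.hausdorffMeasure_image_le (d := Module.finrank ℝ E) (Nat.cast_nonneg _)
  rw [hS, mul_zero] at himage
  exact (Metric.measure_ball_pos _ x hτ).ne'
    (MeasureTheory.measure_mono_null hball (nonpos_iff_eq_zero.1 himage))

/-- Jensen's lemma on maxima: the contact set `S` below is mapped by the Lipschitz map `P + P'` onto
a ball, so it is not a null set and Rademacher's theorem applies at one of its points. -/
theorem HasLowerParaboloids.exists_hasQuadraticExpansionAt [FiniteDimensional ℝ E]
    {w w' : E → ℝ} {P P' : E → E} {C τ : ℝ} (hC : 0 ≤ C)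
    (h : HasLowerParaboloids w P C) (h' : HasLowerParaboloids w' P' C) (hτ : 0 < τ)
    (hmax : ∀ p : E, ‖p‖ < τ → ∃ y, ∀ z, (w + w') z ≤ (w + w') y + inner ℝ p (z - y)) :
    ∃ y, ∃ D D' : E →L[ℝ] E, ‖P y + P' y‖ < τ ∧
      (∀ z, (w + w') z ≤ (w + w') y + inner ℝ (P y + P' y) (z - y)) ∧
      HasQuadraticExpansionAt w (P y) D y ∧ HasQuadraticExpansionAt w' (P' y) D' y := by
  borelize E
  set T : Set E := {y | ∀ z, (w + w') z ≤ (w + w') y + inner ℝ ((P + P') y) (z - y)} with hT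
  set S : Set E := T ∩ {y | ‖P y + P' y‖ < τ}
  have hw : HasParaboloidsOn w P C S := fun y hy => h.hasParaboloidsOn h' y hy.1
  have hw' : HasParaboloidsOn w' P' C S := fun y hy => h'.hasParaboloidsOn h y <| by
    simpa only [hT, add_comm w w', add_comm P P'] using hy.1
  have hlip := hw.lipschitzOnWith hC
  have hlip' := hw'.lipschitzOnWith hC
  have hball : Metric.ball 0 τ ⊆ (fun y => P y + P' y) '' S := by
    intro p hp
    rw [mem_ball_zero_iff] at hp
    obtain ⟨y, hy⟩ := hmax p hp
    have hslope : (P + P') y = p := (h.add h').eq_of_le hy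
    exact ⟨y, ⟨by simpa only [hT, mem_ofPred_eq, hslope] using hy,
      by simpa only [mem_ofPred_eq, ← Pi.add_apply, hslope] using hp⟩, hslope⟩
  have hmeas := hausdorffMeasure_finrank_ne_zero_of_ball_subset_image (hlip.add hlip') hτ hball
  obtain ⟨y, hyS, hd, hd', hdist⟩ := ((MeasureTheory.frequently_ae_mem_iff.2 hmeas).and_eventually
    (hlip.ae_differentiableWithinAt_of_mem.and (hlip'.ae_differentiableWithinAt_of_mem.and
      (Metric.lipschitz_infDist_pt S).ae_differentiableAt))).exists
  exact ⟨y, _, _, hyS.2, hyS.1,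
    hw.hasQuadraticExpansionAt hC (hd hyS).hasFDerivWithinAt hyS hdist,
    hw'.hasQuadraticExpansionAt hC (hd' hyS).hasFDerivWithinAt hyS hdist⟩

end SecondOrder

section Localization

theorem upperSemicontinuousOn_ereal_add {α : Type*} [TopologicalSpace α] {u v : α → EReal}
    {s : Set α} (hu : UpperSemicontinuousOn u s) (hv : UpperSemicontinuousOn v s)
    (hu_top : ∀ x ∈ s, u x < ⊤) (hv_top : ∀ x ∈ s, v x < ⊤) :
    UpperSemicontinuousOn (fun x => u x + v x) s :=
  hu.add' hv fun x hx =>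
    EReal.continuousAt_add (Or.inl (hu_top x hx).ne) (Or.inr (hv_top x hx).ne)

theorem upperSemicontinuousOn_ereal_add_prod {α β : Type*} [TopologicalSpace α]
    [TopologicalSpace β] {u : α → EReal} {v : β → EReal} {s : Set α} {t : Set β}
    (hu : UpperSemicontinuousOn u s) (hv : UpperSemicontinuousOn v t)
    (hu_top : ∀ x ∈ s, u x < ⊤) (hv_top : ∀ x ∈ t, v x < ⊤) :
    UpperSemicontinuousOn (fun c : α × β => u c.1 + v c.2) (s ×ˢ t) :=
  upperSemicontinuousOn_ereal_add (hu.comp continuous_fst.continuousOn fun _ hc => hc.1)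
    (hv.comp continuous_snd.continuousOn fun _ hc => hc.2)
    (fun _ hc => hu_top _ hc.1) (fun _ hc => hv_top _ hc.2)

theorem exists_real_lt_forall_le {α : Type*} [TopologicalSpace α] {u : α → EReal} {s : Set α}
    (hs : IsCompact s) (hu : UpperSemicontinuousOn u s) {c : EReal} (hc : ⊥ < c)
    (hlt : ∀ x ∈ s, u x < c) : ∃ r : ℝ, (r : EReal) < c ∧ ∀ x ∈ s, u x ≤ r := by
  rcases s.eq_empty_or_nonempty with rfl | hne
  · obtain ⟨r, -, hr⟩ := EReal.lt_iff_exists_real_btwn.1 hc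
    exact ⟨r, hr, fun x hx => hx.elim⟩
  · obtain ⟨m, hm, hmax⟩ := hu.exists_isMaxOn hne hs
    obtain ⟨r, hmr, hr⟩ := EReal.lt_iff_exists_real_btwn.1 (hlt m hm)
    exact ⟨r, hr, fun x hx => (hmax hx).trans hmr.le⟩

theorem exists_forall_dist_lt_of_le {α : Type*} [MetricSpace α] {K : Set α}
    (hK : IsCompact K) {Φ : α × α → EReal} (hΦ : UpperSemicontinuousOn Φ (K ×ˢ K)) {x : α}
    (hneg : ∀ z ∈ K, z ≠ x → Φ (z, z) < 0) {δ : ℝ} (hδ : 0 < δ) :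
    ∃ ε > 0, ∀ a ∈ K, ∀ b ∈ K, dist a b < ε → ((-ε : ℝ) : EReal) < Φ (a, b) → dist a x < δ := by
  have hfar : IsCompact ((K ×ˢ K) ∩ {c : α × α | δ ≤ dist c.1 x}) :=
    (hK.prod hK).inter_right (isClosed_le continuous_const (by fun_prop))
  have hdist : Continuous fun c : α × α => ((-dist c.1 c.2 : ℝ) : EReal) :=
    continuous_coe_real_ereal.comp (by fun_prop)
  obtain ⟨r, hr, hle⟩ := exists_real_lt_forall_le hfar (c := 0)
    ((hΦ.mono inter_subset_left).inf (hdist.upperSemicontinuous.upperSemicontinuousOn _))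
    EReal.bot_lt_zero fun ⟨a, b⟩ hc => by
      rcases eq_or_ne a b with rfl | hab
      · exact min_lt_of_left_lt (hneg a hc.1.1 (dist_pos.1 (hδ.trans_le hc.2)))
      · exact min_lt_of_right_lt (by exact_mod_cast neg_neg_of_pos (dist_pos.2 hab))
  refine ⟨-r, neg_pos.2 (EReal.coe_neg'.1 hr), fun a ha b hb hab hΦab => ?_⟩
  rw [neg_neg] at hΦab
  by_contra! hax
  refine (lt_min hΦab (EReal.coe_lt_coe_iff.2 ?_)).not_ge (hle (a, b) ⟨⟨ha, hb⟩, hax⟩)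
  exact lt_neg_of_lt_neg hab

variable {E : Type*} [NormedAddCommGroup E] [InnerProductSpace ℝ E]

theorem exists_forall_norm_sub_le_of_penalty_le (C R : ℝ) {η : ℝ} (hη : 0 < η) :
    ∃ L > 0, ∀ x a b y p : E, ‖p‖ ≤ 1 → ‖a - x‖ ≤ R →
      L * ‖y - a‖ ^ 2 + L * ‖y - b‖ ^ 2 + inner ℝ p (y - x) ≤ C → ‖y - a‖ ≤ η ∧ ‖y - b‖ ≤ η := by
  set B : ℝ := |C| + |R| + 1
  refine ⟨1 + B / η ^ 2, by positivity, fun x a b y p hp hax hle => ?_⟩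
  have hyx : ‖y - x‖ ≤ ‖y - a‖ + |R| :=
    (norm_sub_le_norm_sub_add_norm_sub y a x).trans (by gcongr; exact hax.trans (le_abs_self R))
  have hinner : -‖y - x‖ ≤ inner ℝ p (y - x) :=
    (neg_le_neg (mul_le_of_le_one_left (norm_nonneg _) hp)).trans
      (abs_le.1 (abs_real_inner_le_norm p (y - x))).1
  have hsum : B / η ^ 2 * (‖y - a‖ ^ 2 + ‖y - b‖ ^ 2) ≤ B := by
    nlinarith [sq_nonneg (‖y - a‖ - 1), sq_nonneg ‖y - b‖, le_abs_self C]
  have hsq : ‖y - a‖ ^ 2 + ‖y - b‖ ^ 2 ≤ η ^ 2 := by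
    rw [div_mul_eq_mul_div, div_le_iff₀ (by positivity)] at hsum
    exact le_of_mul_le_mul_left hsum (by positivity)
  exact ⟨le_of_sq_le_sq (by linarith [sq_nonneg ‖y - b‖]) hη.le,
    le_of_sq_le_sq (by linarith [sq_nonneg ‖y - a‖]) hη.le⟩

theorem exists_penalization {K : Set E} (hK : IsCompact K) {Φ : E × E → EReal}
    (hΦ : UpperSemicontinuousOn Φ (K ×ˢ K)) (hΦ_top : ∀ c ∈ K ×ˢ K, Φ c < ⊤) {x : E}
    (hneg : ∀ z ∈ K, z ≠ x → Φ (z, z) < 0) {δ : ℝ} (hδ : 0 < δ) :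
    ∃ L > 0, ∃ τ > 0, ∀ a ∈ K, ∀ b ∈ K, ∀ y p : E, ‖p‖ < τ →
      ((L * ‖y - a‖ ^ 2 + L * ‖y - b‖ ^ 2 + inner ℝ p (y - x) : ℝ) : EReal) ≤ Φ (a, b) →
      ‖y - x‖ < δ ∧ ‖a - x‖ < δ ∧ ‖b - x‖ < δ := by
  obtain ⟨ε, hε, hclose⟩ := exists_forall_dist_lt_of_le hK hΦ hneg (half_pos hδ)
  obtain ⟨C, -, hC⟩ := exists_real_lt_forall_le (hK.prod hK) hΦ bot_lt_top hΦ_top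
  obtain ⟨R, hR0, hR⟩ := hK.isBounded.subset_closedBall_lt 0 x
  set η : ℝ := min (δ / 4) (ε / 3)
  have hηδ : η ≤ δ / 4 := min_le_left _ _
  have hηε : η ≤ ε / 3 := min_le_right _ _
  obtain ⟨L, hL, hnear⟩ := exists_forall_norm_sub_le_of_penalty_le (E := E) C R
    (show 0 < η by positivity)
  refine ⟨L, hL, min 1 (ε / (η + R)), by positivity, fun a ha b hb y p hp hle => ?_⟩
  have haxR : ‖a - x‖ ≤ R := dist_eq_norm a x ▸ hR ha
  obtain ⟨hya, hyb⟩ := hnear x a b y p (hp.le.trans (min_le_left _ _)) haxR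
    (EReal.coe_le_coe_iff.1 (hle.trans (hC _ ⟨ha, hb⟩)))
  have hyx : ‖y - x‖ ≤ ‖y - a‖ + ‖a - x‖ := norm_sub_le_norm_sub_add_norm_sub y a x
  have hbx : ‖b - x‖ ≤ ‖y - b‖ + ‖y - x‖ :=
    norm_sub_rev b y ▸ norm_sub_le_norm_sub_add_norm_sub b y x
  have hab : dist a b < ε := by
    have := norm_sub_le_norm_sub_add_norm_sub a y b
    rw [norm_sub_rev a y] at this
    rw [dist_eq_norm]
    linarith
  have hpε : ‖p‖ * ‖y - x‖ < ε := by
    calc ‖p‖ * ‖y - x‖ ≤ ‖p‖ * (η + R) := by gcongr; linarith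
      _ < ε := (lt_div_iff₀ (by positivity)).1 (hp.trans_le (min_le_right _ _))
  have hax : ‖a - x‖ < δ / 2 := by
    refine dist_eq_norm a x ▸ hclose a ha b hb hab (lt_of_lt_of_le ?_ hle)
    rw [EReal.coe_lt_coe_iff]
    have hinner := (abs_le.1 (abs_real_inner_le_norm p (y - x))).1
    have : 0 ≤ L * ‖y - a‖ ^ 2 + L * ‖y - b‖ ^ 2 := by positivity
    linarith
  exact ⟨by linarith, by linarith, by linarith⟩

end Localization

section SupConvolution

variable {E : Type*} [NormedAddCommGroup E]

/-- `w y = sup {u z - L ‖y - z‖ ^ 2 | z ∈ K}`, the supremum being attained at `a y`; moving the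
penalty to the other side keeps subtraction out of `EReal`. -/
structure IsSupConvolution (K : Set E) (L : ℝ) (u : E → EReal) (w : E → ℝ) (a : E → E) : Prop where
  mem : ∀ y, a y ∈ K
  apply_eq : ∀ y, u (a y) = ((w y + L * ‖y - a y‖ ^ 2 : ℝ) : EReal)
  le : ∀ y, ∀ z ∈ K, u z ≤ ((w y + L * ‖y - z‖ ^ 2 : ℝ) : EReal)

theorem exists_isSupConvolution {K : Set E} (hK : IsCompact K) {u : E → EReal}
    (hu : UpperSemicontinuousOn u K) (hu_top : ∀ x ∈ K, u x < ⊤) {x : E} (hx : x ∈ K)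
    (hux : u x ≠ ⊥) (L : ℝ) : ∃ w a, IsSupConvolution K L u w a := by
  have hmax (y : E) : ∃ a ∈ K, ∀ z ∈ K,
      u z + ((-(L * ‖y - z‖ ^ 2) : ℝ) : EReal) ≤ u a + ((-(L * ‖y - a‖ ^ 2) : ℝ) : EReal) := by
    have hpenalty : Continuous fun z => ((-(L * ‖y - z‖ ^ 2) : ℝ) : EReal) :=
      continuous_coe_real_ereal.comp (by fun_prop)
    exact (upperSemicontinuousOn_ereal_add hu
      (hpenalty.upperSemicontinuous.upperSemicontinuousOn K) hu_top
      fun z _ => EReal.coe_lt_top _).exists_isMaxOn ⟨x, hx⟩ hK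
  choose a haK hle using hmax
  have hfinite (y : E) : ((u (a y)).toReal : EReal) = u (a y) := by
    refine EReal.coe_toReal (hu_top _ (haK y)).ne fun hbot => hux ?_
    have := hle y x hx
    rwa [hbot, EReal.bot_add, le_bot_iff, EReal.add_eq_bot_iff,
      or_iff_left (EReal.coe_ne_bot _)] at this
  refine ⟨fun y => (u (a y)).toReal - L * ‖y - a y‖ ^ 2, a, haK, fun y => ?_, fun y z hz => ?_⟩
  · rw [sub_add_cancel, hfinite]
  · have := add_le_add_left (hle y z hz) ((L * ‖y - z‖ ^ 2 : ℝ) : EReal)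
    rwa [add_assoc, ← EReal.coe_add, neg_add_cancel, EReal.coe_zero, add_zero, ← hfinite y,
      ← EReal.coe_add, ← EReal.coe_add, ← sub_eq_add_neg] at this

namespace IsSupConvolution

variable {K : Set E} {L : ℝ} {u v : E → EReal} {w w' : E → ℝ} {a b : E → E}

theorem apply_le (h : IsSupConvolution K L u w a) {x : E} (hx : x ∈ K) : u x ≤ w x := by
  simpa only [sub_self, norm_zero, zero_pow two_ne_zero, mul_zero, add_zero] using h.le x x hx

theorem penalty_le (h : IsSupConvolution K L u w a) (h' : IsSupConvolution K L v w' b) {y : E}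
    {c : ℝ} (hc : c ≤ (w + w') y) :
    ((L * ‖y - a y‖ ^ 2 + L * ‖y - b y‖ ^ 2 + c : ℝ) : EReal) ≤ u (a y) + v (b y) := by
  rw [h.apply_eq, h'.apply_eq, ← EReal.coe_add, EReal.coe_le_coe_iff]
  rw [Pi.add_apply] at hc
  linarith

theorem add_apply_nonneg (h : IsSupConvolution K L u w a) (h' : IsSupConvolution K L v w' b)
    {x : E} (hx : x ∈ K) (hsum : 0 ≤ u x + v x) : 0 ≤ (w + w') x := by
  have := hsum.trans (add_le_add (h.apply_le hx) (h'.apply_le hx))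
  rwa [← EReal.coe_add, EReal.coe_nonneg] at this

variable [InnerProductSpace ℝ E]

theorem hasLowerParaboloids (h : IsSupConvolution K L u w a) :
    HasLowerParaboloids w (fun y => (2 * L) • (a y - y)) L := by
  intro y z
  have hle := h.le z (a y) (h.mem y)
  rw [h.apply_eq, EReal.coe_le_coe_iff] at hle
  have hsq : ‖z - a y‖ ^ 2
      = ‖z - y‖ ^ 2 + 2 * inner ℝ (z - y) (y - a y) + ‖y - a y‖ ^ 2 := by
    rw [← norm_add_sq_real, sub_add_sub_cancel]
  have hinner : inner ℝ (a y - y) (z - y) = -inner ℝ (z - y) (y - a y) := by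
    rw [real_inner_comm, ← inner_neg_right, neg_sub]
  rw [hsq] at hle
  rw [real_inner_smul_left, hinner]
  linarith

theorem hasUpperQuadraticAt (h : IsSupConvolution K L u w a) {y p : E} {D : E →L[ℝ] E}
    (hK : K ∈ 𝓝 (a y)) (hw : HasQuadraticExpansionAt w p D y) {κ : ℝ} (hκ : 0 < κ) :
    HasUpperQuadraticAt u (a y) (w y + L * ‖y - a y‖ ^ 2) p
      (D + κ • ContinuousLinearMap.id ℝ E) := by
  refine ⟨h.apply_eq y, ?_⟩
  have hmem : ∀ᶠ x in 𝓝 (0 : E), a y + x ∈ K :=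
    (continuous_const.add continuous_id).tendsto' 0 (a y) (add_zero _) hK
  filter_upwards [hmem, hw.def (half_pos hκ)] with x hxK hx
  refine (h.le (y + x) _ hxK).trans (EReal.coe_le_coe_iff.2 ?_)
  rw [add_sub_add_right_eq_sub]
  have hx := (abs_le.1 hx).2
  rw [norm_pow, norm_norm] at hx
  rw [inner_add_smul_id_apply]
  linarith

theorem inner_le_add_apply (h : IsSupConvolution K L u w a) (h' : IsSupConvolution K L v w' b)
    {x y q : E} (hx : x ∈ K) (hsum : 0 ≤ u x + v x)
    (hle : (w + w') x ≤ (w + w') y + inner ℝ q (x - y)) : inner ℝ q (y - x) ≤ (w + w') y := by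
  have := (h.add_apply_nonneg h' hx hsum).trans hle
  rwa [← neg_sub y x, inner_neg_right, ← sub_eq_add_neg, sub_nonneg] at this

theorem exists_forall_le_add_inner [FiniteDimensional ℝ E] (h : IsSupConvolution K L u w a)
    (h' : IsSupConvolution K L v w' b) {x : E} (hx : x ∈ K) (hsum : 0 ≤ u x + v x) {p : E} {r : ℝ}
    (hpen : ∀ y, ((L * ‖y - a y‖ ^ 2 + L * ‖y - b y‖ ^ 2 + inner ℝ p (y - x) : ℝ) : EReal)
      ≤ u (a y) + v (b y) → ‖y - x‖ < r) :
    ∃ y, ∀ z, (w + w') z ≤ (w + w') y + inner ℝ p (z - y) := by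
  have hcont : Continuous fun z => (w + w') z - inner ℝ p (z - x) :=
    (h.hasLowerParaboloids.add h'.hasLowerParaboloids).continuous.sub (by fun_prop)
  have hx0 : 0 ≤ (w + w') x - inner ℝ p (x - x) := by
    rw [sub_self, inner_zero_right, sub_zero]
    exact h.add_apply_nonneg h' hx hsum
  have hfar : ∀ᶠ z in cocompact E,
      (w + w') z - inner ℝ p (z - x) ≤ (w + w') x - inner ℝ p (x - x) := by
    filter_upwards [(isCompact_closedBall x r).compl_mem_cocompact] with z hz
    contrapose! hz
    rw [notMem_compl_iff, Metric.mem_closedBall, dist_eq_norm]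
    exact (hpen z (h.penalty_le h' (sub_nonneg.1 (hx0.trans hz.le)))).le
  obtain ⟨y, hy⟩ := hcont.exists_forall_ge' x hfar
  refine ⟨y, fun z => ?_⟩
  have := hy z
  rw [← sub_sub_sub_cancel_right z y x, inner_sub_right]
  linarith

theorem exists_hasQuadraticExpansionAt_add [FiniteDimensional ℝ E]
    (h : IsSupConvolution K L u w a) (h' : IsSupConvolution K L v w' b) (hL : 0 ≤ L) {x : E}
    (hx : x ∈ K) (hsum : 0 ≤ u x + v x) {τ r : ℝ} (hτ : 0 < τ)
    (hpen : ∀ y p : E, ‖p‖ < τ →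
      ((L * ‖y - a y‖ ^ 2 + L * ‖y - b y‖ ^ 2 + inner ℝ p (y - x) : ℝ) : EReal)
        ≤ u (a y) + v (b y) → ‖y - x‖ < r) :
    ∃ y p q, ∃ D D' : E →L[ℝ] E, ‖p + q‖ < τ ∧ inner ℝ (p + q) (y - x) ≤ (w + w') y ∧
      (∀ z, inner ℝ ((D + D') z) z ≤ 0) ∧
      HasQuadraticExpansionAt w p D y ∧ HasQuadraticExpansionAt w' q D' y := by
  obtain ⟨y, D, D', hq, hcontact, hD, hD'⟩ :=
    h.hasLowerParaboloids.exists_hasQuadraticExpansionAt hL h'.hasLowerParaboloids hτ fun p hp =>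
      h.exists_forall_le_add_inner h' hx hsum fun y => hpen y p hp
  exact ⟨y, _, _, D, D', hq, h.inner_le_add_apply h' hx hsum (hcontact x),
    (hD.add hD').inner_nonpos_of_le hcontact, hD, hD'⟩

end IsSupConvolution

/-- The theorem on sums at a strict maximum of `u + v`. -/
theorem exists_hasUpperQuadraticAt [InnerProductSpace ℝ E] [FiniteDimensional ℝ E]
    {K : Set E} (hK : IsCompact K) {x : E} (hKx : K ∈ 𝓝 x) {u v : E → EReal}
    (hu : UpperSemicontinuousOn u K) (hv : UpperSemicontinuousOn v K) (hu_top : ∀ z ∈ K, u z < ⊤)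
    (hv_top : ∀ z ∈ K, v z < ⊤) (hx : u x + v x = 0)
    (hneg : ∀ z ∈ K, z ≠ x → u z + v z < 0) {δ : ℝ} (hδ : 0 < δ) :
    ∃ a b : E, ∃ α β : ℝ, ∃ p q : E, ∃ A B : E →L[ℝ] E,
      ‖a - x‖ < δ ∧ ‖b - x‖ < δ ∧ -δ < α + β ∧ ‖p + q‖ < δ ∧
      (∀ z, inner ℝ ((A + B) z) z ≤ δ * ‖z‖ ^ 2) ∧
      HasUpperQuadraticAt u a α p A ∧ HasUpperQuadraticAt v b β q B := by
  obtain ⟨ρ, hρ, hball⟩ := Metric.mem_nhds_iff.1 hKx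
  have hxK : x ∈ K := mem_of_mem_nhds hKx
  have hbot : u x ≠ ⊥ ∧ v x ≠ ⊥ := by
    rw [← not_or, ← EReal.add_eq_bot_iff, hx]
    exact EReal.zero_ne_bot
  obtain ⟨L, hL, τ, hτ, hpen⟩ := exists_penalization hK
    (upperSemicontinuousOn_ereal_add_prod hu hv hu_top hv_top)
    (fun c hc => EReal.add_lt_top (hu_top _ hc.1).ne (hv_top _ hc.2).ne) hneg (lt_min hδ hρ)
  obtain ⟨w, a, hw⟩ := exists_isSupConvolution hK hu hu_top hxK hbot.1 L
  obtain ⟨w', b, hw'⟩ := exists_isSupConvolution hK hv hv_top hxK hbot.2 L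
  obtain ⟨y, p, q, D, D', hpq, hwy, hDD, hD, hD'⟩ :=
    hw.exists_hasQuadraticExpansionAt_add hw' hL.le hxK hx.ge (lt_min hτ (lt_min hδ one_pos))
      fun y p hp hy =>
        (hpen _ (hw.mem y) _ (hw'.mem y) y p (hp.trans_le (min_le_left _ _)) hy).1
  obtain ⟨hpqτ, hpqδ, hpq1⟩ : ‖p + q‖ < τ ∧ ‖p + q‖ < δ ∧ ‖p + q‖ < 1 := by
    simpa only [lt_min_iff] using hpq
  obtain ⟨hy, ha, hb⟩ := hpen _ (hw.mem y) _ (hw'.mem y) y (p + q) hpqτ (hw.penalty_le hw' hwy)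
  obtain ⟨⟨hyδ, -⟩, ⟨haδ, haρ⟩, ⟨hbδ, hbρ⟩⟩ := And.intro (lt_min_iff.1 hy)
    (And.intro (lt_min_iff.1 ha) (lt_min_iff.1 hb))
  have hKball {z : E} (hz : ‖z - x‖ < ρ) : K ∈ 𝓝 z :=
    mem_of_superset (Metric.isOpen_ball.mem_nhds (mem_ball_iff_norm.2 hz)) hball
  refine ⟨a y, b y, _, _, _, _, _, _, haδ, hbδ, ?_, hpqδ, fun z => ?_,
    hw.hasUpperQuadraticAt (hKball haρ) hD (half_pos hδ),
    hw'.hasUpperQuadraticAt (hKball hbρ) hD' (half_pos hδ)⟩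
  · have hinner : -δ < inner ℝ (p + q) (y - x) :=
      (neg_lt_neg (((mul_le_of_le_one_left (norm_nonneg _) hpq1.le).trans_lt hyδ))).trans_le
        (abs_le.1 (abs_real_inner_le_norm (p + q) (y - x))).1
    rw [Pi.add_apply] at hwy
    have : 0 ≤ L * ‖y - a y‖ ^ 2 + L * ‖y - b y‖ ^ 2 := by positivity
    linarith
  · have := hDD z
    rw [add_apply, inner_add_left] at this ⊢
    rw [inner_add_smul_id_apply, inner_add_smul_id_apply]
    linarith

end SupConvolution

section Duality

variable {n : ℕ}

/-- The minimal monotonicity cone `𝒩 × {0} × 𝒫`: a set of jets is monotone for it exactly when it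
satisfies the negativity and positivity properties. -/
def minimalCone (n : ℕ) : Set (Jet n) :=
  {J | J.1 ≤ 0 ∧ J.2.1 = 0 ∧ PSD J.2.2}

theorem IsCCSubequation.add_minimalCone_subset {F : Set (Jet n)} (hF : IsCCSubequation F) :
    F + minimalCone n ⊆ F := by
  rintro _ ⟨J, hJ, ⟨s, p, P⟩, ⟨hs, rfl, hP⟩, rfl⟩
  have := hF.2.2.2 _ (hF.2.2.1 J hJ P hP) s hs
  rwa [← add_zero J.2.1] at this

theorem mem_dualJ {S : Set (Jet n)} {J : Jet n} : J ∈ dualJ S ↔ -J ∉ interior S :=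
  Iff.rfl

theorem isClosed_dualJ (S : Set (Jet n)) : IsClosed (dualJ S) :=
  isOpen_interior.neg.isClosed_compl

theorem add_dualJ_subset {S T : Set (Jet n)} (h : S + T ⊆ S) : S + dualJ S ⊆ dualJ T := by
  rintro _ ⟨J, hJ, K, hK, rfl⟩
  refine mem_dualJ.2 fun hT => mem_dualJ.1 hK ?_
  have := interior_mono h (subset_interior_add_right (add_mem_add hJ hT))
  rwa [neg_add, add_neg_cancel_left] at this

theorem dualJ_add_subset {S T : Set (Jet n)} (h : S + T ⊆ S) : dualJ S + T ⊆ dualJ S := by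
  rintro _ ⟨J, hJ, K, hK, rfl⟩
  refine mem_dualJ.2 fun hS => mem_dualJ.1 hJ ?_
  have := interior_mono h (subset_interior_add_left (add_mem_add hS hK))
  rwa [neg_add, neg_add_cancel_right] at this

end Duality

section Jets

open scoped Matrix

variable {n : ℕ}

/-- The 2-jet of `φ` at `x`. The Hessian is replaced by its self-adjoint part, which agrees with it
wherever `φ` is `C²`, so that the jet lies in `Jet n` for every function `φ`. -/
def jet (φ : En n → ℝ) (x : En n) : Jet n :=
  (φ x, gradient φ x, selfAdjointPart ℝ (hess φ x))

/-- The symmetric matrix with the same quadratic form as the operator `D`. -/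
def symMat : (En n →L[ℝ] En n) →ₗ[ℝ] SymMat n :=
  selfAdjointPart ℝ ∘ₗ (Matrix.toEuclideanCLM (n := Fin n) (𝕜 := ℝ)).symm.toAlgEquiv.toLinearMap

theorem coe_symMat (D : En n →L[ℝ] En n) :
    (symMat D : Matrix (Fin n) (Fin n) ℝ) =
      (2⁻¹ : ℝ) • ((Matrix.toEuclideanCLM (n := Fin n) (𝕜 := ℝ)).symm D +
        ((Matrix.toEuclideanCLM (n := Fin n) (𝕜 := ℝ)).symm D)ᵀ) := by
  rw [← Matrix.conjTranspose_eq_transpose_of_trivial]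
  exact (selfAdjointPart_apply_coe ℝ _).trans (by rw [invOf_eq_inv]; rfl)

theorem inner_apply_eq_dotProduct (D : En n →L[ℝ] En n) (x y : En n) :
    inner ℝ (D x) y =
      y.ofLp ⬝ᵥ (Matrix.toEuclideanCLM (n := Fin n) (𝕜 := ℝ)).symm D *ᵥ x.ofLp := by
  rw [← Matrix.inner_toEuclideanCLM, StarAlgEquiv.apply_symm_apply, real_inner_comm]

theorem symMat_apply (D : En n →L[ℝ] En n) (i j : Fin n) :
    (symMat D : Matrix (Fin n) (Fin n) ℝ) i j =
      (inner ℝ (D (EuclideanSpace.single i 1)) (EuclideanSpace.single j 1) +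
        inner ℝ (D (EuclideanSpace.single j 1)) (EuclideanSpace.single i 1)) / 2 := by
  simp [coe_symMat, inner_apply_eq_dotProduct, div_eq_inv_mul, add_comm]

theorem psd_symMat {D : En n →L[ℝ] En n} (hD : ∀ x, 0 ≤ inner ℝ (D x) x) : PSD (symMat D) := by
  refine .of_dotProduct_mulVec_nonneg (symMat D).2 fun x => ?_
  have hx : star x ⬝ᵥ (symMat D : Matrix (Fin n) (Fin n) ℝ) *ᵥ x =
      inner ℝ (D (WithLp.toLp 2 x)) (WithLp.toLp 2 x) := by
    rw [coe_symMat, inner_apply_eq_dotProduct, star_trivial, Matrix.smul_mulVec, dotProduct_smul,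
      Matrix.add_mulVec, dotProduct_add, Matrix.mulVec_transpose, dotProduct_comm x (x ᵥ* _),
      ← Matrix.dotProduct_mulVec, ← two_mul, smul_eq_mul, inv_mul_cancel_left₀ two_ne_zero]
  exact hx ▸ hD _

theorem hess_apply (φ : En n → ℝ) (x : En n) (i j : Fin n) :
    hess φ x i j = fderiv ℝ (fderiv ℝ φ) x (EuclideanSpace.single i 1)
      (EuclideanSpace.single j 1) :=
  iteratedFDeriv_two_apply φ x _

theorem coe_jet_hess {φ : En n → ℝ} {x : En n} (hφ : ContDiffAt ℝ 2 φ x) :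
    ((jet φ x).2.2 : Matrix (Fin n) (Fin n) ℝ) = hess φ x := by
  refine IsSelfAdjoint.coe_selfAdjointPart_apply ℝ (Matrix.ext fun i j => ?_)
  rw [Matrix.star_apply, star_trivial, hess_apply, hess_apply]
  exact hφ.isSymmSndFDerivAt (by simp) _ _

theorem isUpperTestJet_iff {X : Set (En n)} {u : En n → EReal} {x : En n} {J : Jet n} :
    IsUpperTestJet X u x J ↔ ∃ φ : En n → ℝ, ContDiffAt ℝ 2 φ x ∧ X ∈ 𝓝 x ∧
      (∀ᶠ y in 𝓝 x, u y ≤ φ y) ∧ u x = φ x ∧ J = jet φ x := by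
  constructor
  · rintro ⟨φ, V, hV, hx, hVX, hφ, hle, heq, h₁, h₂, h₃⟩
    have hφx := hφ.contDiffAt (hV.mem_nhds hx)
    exact ⟨φ, hφx, mem_of_superset (hV.mem_nhds hx) hVX, eventually_of_mem (hV.mem_nhds hx) hle,
      heq, Prod.ext h₁ (Prod.ext h₂ (Subtype.ext (h₃.trans (coe_jet_hess hφx).symm)))⟩
  · rintro ⟨φ, hφ, hX, hle, heq, rfl⟩
    obtain ⟨V, hVsub, hV, hx⟩ := mem_nhds_iff.1 ((hφ.eventually (by simp)).and (hle.and hX))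
    exact ⟨φ, V, hV, hx, fun y hy => (hVsub hy).2.2,
      fun y hy => (hVsub hy).1.contDiffWithinAt, fun y hy => (hVsub hy).2.1, heq, rfl, rfl,
      coe_jet_hess hφ⟩

theorem jet_add {φ ψ : En n → ℝ} {x : En n} (hφ : ContDiffAt ℝ 2 φ x) (hψ : ContDiffAt ℝ 2 ψ x) :
    jet (φ + ψ) x = jet φ x + jet ψ x := by
  have hgrad : gradient (φ + ψ) x = gradient φ x + gradient ψ x := by
    rw [gradient, fderiv_add (hφ.differentiableAt two_ne_zero) (hψ.differentiableAt two_ne_zero),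
      map_add]
    rfl
  have hhess : hess (φ + ψ) x = hess φ x + hess ψ x := by
    ext i j
    exact DFunLike.congr_fun (iteratedFDeriv_add_apply hφ hψ) _
  exact Prod.ext rfl (Prod.ext hgrad ((congrArg _ hhess).trans (map_add _ _ _)))

theorem continuousAt_jet {φ : En n → ℝ} {x : En n} (hφ : ContDiffAt ℝ 2 φ x) :
    ContinuousAt (jet φ) x := by
  have hφ' : ContDiffAt ℝ 1 (fderiv ℝ φ) x := hφ.fderiv_right (by norm_num)
  have hφ'' : ContinuousAt (fderiv ℝ (fderiv ℝ φ)) x :=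
    (hφ'.fderiv_right (m := 0) (by norm_num)).continuousAt
  have hhess : ContinuousAt (hess φ) x := by
    refine continuousAt_pi.2 fun i => continuousAt_pi.2 fun j => ?_
    simp only [hess_apply]
    fun_prop
  have hgrad : ContinuousAt (gradient φ) x :=
    (InnerProductSpace.toDual ℝ (En n)).symm.continuous.continuousAt.comp hφ'.continuousAt
  exact hφ.continuousAt.prodMk (hgrad.prodMk
    ((continuous_selfAdjointPart ℝ _).continuousAt.comp hhess))

theorem hess_apply_eq {φ : En n → ℝ} {x : En n} (hφ : ContDiffAt ℝ 2 φ x) (i j : Fin n) :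
    hess φ x i j = fderiv ℝ (fun z => fderiv ℝ φ z (EuclideanSpace.single j 1)) x
      (EuclideanSpace.single i 1) := by
  have hφ' : DifferentiableAt ℝ (fderiv ℝ φ) x :=
    (hφ.fderiv_right (m := 1) (by norm_num)).differentiableAt one_ne_zero
  rw [hess_apply, fderiv_clm_apply hφ' (differentiableAt_const _)]
  simp

theorem IsUpperTestJet.add_jet {X : Set (En n)} {u : En n → EReal} {x : En n} {J : Jet n}
    (hJ : IsUpperTestJet X u x J) {φ : En n → ℝ} (hφ : ContDiffAt ℝ 2 φ x) :
    IsUpperTestJet X (fun y => u y + φ y) x (J + jet φ x) := by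
  obtain ⟨ψ, hψ, hX, hle, heq, rfl⟩ := isUpperTestJet_iff.1 hJ
  refine isUpperTestJet_iff.2 ⟨ψ + φ, hψ.add hφ, hX, ?_, ?_, (jet_add hψ hφ).symm⟩
  · filter_upwards [hle] with y hy
    exact add_le_add_left hy _
  · rw [heq]
    rfl

/-- The quadratic function with 2-jet `(α, p, D)` at `a`. -/
def quadratic (a : En n) (α : ℝ) (p : En n) (D : En n →L[ℝ] En n) (z : En n) : ℝ :=
  α + inner ℝ p (z - a) + inner ℝ (D (z - a)) (z - a) / 2

variable (a : En n) (α : ℝ) (p : En n) (D : En n →L[ℝ] En n)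

theorem contDiff_quadratic : ContDiff ℝ 2 (quadratic a α p D) := by
  have hsub : ContDiff ℝ 2 fun z => z - a := by fun_prop
  exact (contDiff_const.add (contDiff_const.inner ℝ hsub)).add
    (((D.contDiff.comp hsub).inner ℝ hsub).div_const 2)

theorem fderiv_quadratic_apply (z x : En n) :
    fderiv ℝ (quadratic a α p D) z x =
      inner ℝ p x + (inner ℝ (D (z - a)) x + inner ℝ (D x) (z - a)) / 2 := by
  have hsub : HasFDerivAt (fun z => z - a) (ContinuousLinearMap.id ℝ (En n)) z :=
    (hasFDerivAt_id z).sub_const a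
  have h : HasFDerivAt (quadratic a α p D) _ z :=
    (((hasFDerivAt_const p z).inner ℝ hsub).const_add α).add
      (((D.hasFDerivAt.comp z hsub).inner ℝ hsub).mul_const (2⁻¹ : ℝ))
  rw [h.fderiv]
  simp [div_eq_inv_mul]

theorem hess_quadratic : hess (quadratic a α p D) a = symMat D := by
  ext i j
  set e : Fin n → En n := fun k => EuclideanSpace.single k 1
  set ℓ : En n →L[ℝ] ℝ := (2⁻¹ : ℝ) • (innerSL ℝ (e j) ∘L D + innerSL ℝ (D (e j)))
  have hfderiv : (fun z => fderiv ℝ (quadratic a α p D) z (e j)) =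
      fun z => inner ℝ p (e j) + ℓ (z - a) := by
    funext z
    simp [fderiv_quadratic_apply, ℓ, real_inner_comm, div_eq_inv_mul, mul_add]
  rw [hess_apply_eq (contDiff_quadratic a α p D).contDiffAt, hfderiv, fderiv_const_add,
    fderiv_comp_sub, ℓ.fderiv, symMat_apply]
  simp [ℓ, e, real_inner_comm, div_eq_inv_mul, mul_add]

theorem jet_quadratic : jet (quadratic a α p D) a = (α, p, symMat D) := by
  have hgrad : gradient (quadratic a α p D) a = p :=
    ext_inner_right ℝ fun x => by simp [inner_gradient_left, fderiv_quadratic_apply]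
  refine Prod.ext (by simp [jet, quadratic]) (Prod.ext hgrad (Subtype.ext ?_))
  exact (coe_jet_hess (contDiff_quadratic a α p D).contDiffAt).trans (hess_quadratic a α p D)

variable {a α p D}

theorem HasUpperQuadraticAt.isUpperTestJet {X : Set (En n)} {u : En n → EReal}
    (h : HasUpperQuadraticAt u a α p D) (hX : X ∈ 𝓝 a) :
    IsUpperTestJet X u a (α, p, symMat D) := by
  refine isUpperTestJet_iff.2 ⟨quadratic a α p D, (contDiff_quadratic a α p D).contDiffAt, hX, ?_,
    by simpa [quadratic] using h.1, (jet_quadratic a α p D).symm⟩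
  have hshift : Tendsto (fun z => z - a) (𝓝 a) (𝓝 0) :=
    (continuous_id.sub continuous_const).tendsto' a 0 (sub_self a)
  filter_upwards [hshift.eventually h.2] with z hz
  rwa [add_sub_cancel] at hz

end Jets

section Addition

variable {n : ℕ} {F G H : Set (Jet n)} {X : Set (En n)} {u v : En n → EReal}

theorem USCOn.add (hu : USCOn u X) (hv : USCOn v X) : USCOn (fun x => u x + v x) X :=
  ⟨upperSemicontinuousOn_ereal_add hu.1 hv.1 hu.2 hv.2,
    fun x hx => EReal.add_lt_top (hu.2 x hx).ne (hv.2 x hx).ne⟩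

theorem uscOn_coe {φ : En n → ℝ} (hφ : ContinuousOn φ X) : USCOn (fun x => (φ x : EReal)) X :=
  ⟨(continuous_coe_real_ereal.comp_continuousOn hφ).upperSemicontinuousOn,
    fun _ _ => EReal.coe_lt_top _⟩

theorem exists_isUpperTestJet_add_eq (hu : USCOn u X) (hv : USCOn v X) {x : En n} (hX : X ∈ 𝓝 x)
    {φ : En n → ℝ} (hφ : ContDiffAt ℝ 2 φ x) (hlt : ∀ᶠ y in 𝓝 x, y ≠ x → u y + v y < φ y)
    (heq : u x + v x = φ x) {δ : ℝ} (hδ : 0 < δ) :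
    ∃ a ∈ X, ∃ b ∈ X, ∃ J₁ J₂ : Jet n, IsUpperTestJet X u a J₁ ∧ IsUpperTestJet X v b J₂ ∧
      ‖b - x‖ < δ ∧ ∃ w : En n, ‖w‖ < δ ∧ ∃ m ∈ minimalCone n,
        J₁ + J₂ + m = (-δ, w, δ • symMat (.id ℝ (En n))) + jet φ b := by
  obtain ⟨r, hr, hball⟩ := Metric.eventually_nhds_iff_ball.1
    ((hφ.eventually (by simp)).and (hlt.and (eventually_mem_nhds_iff.2 hX)))
  set K := Metric.closedBall x (r / 2)
  have hK : ∀ y ∈ K, ContDiffAt ℝ 2 φ y ∧ (y ≠ x → u y + v y < φ y) ∧ X ∈ 𝓝 y := fun y hy =>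
    hball y (Metric.closedBall_subset_ball (half_lt_self hr) hy)
  have hKX : K ⊆ X := fun y hy => mem_of_mem_nhds (hK y hy).2.2
  have hvφ : USCOn (fun y => v y + ((-φ y : ℝ) : EReal)) K :=
    USCOn.add ⟨hv.1.mono hKX, fun y hy => hv.2 y (hKX hy)⟩
      (uscOn_coe fun y hy => (hK y hy).1.continuousAt.neg.continuousWithinAt)
  obtain ⟨a, b, α, β, p, q, A, B, ha, hb, hαβ, hpq, hAB, hua, hvb⟩ :=
    exists_hasUpperQuadraticAt (isCompact_closedBall x (r / 2))
      (Metric.closedBall_mem_nhds x (half_pos hr)) (hu.1.mono hKX) hvφ.1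
      (fun y hy => hu.2 y (hKX hy)) hvφ.2
      (by rw [← add_assoc, heq, ← EReal.coe_add, add_neg_cancel, EReal.coe_zero])
      (fun y hy hne => by
        have := EReal.add_lt_add_right_coe ((hK y hy).2.1 hne) (-φ y)
        rwa [← EReal.coe_add, add_neg_cancel, EReal.coe_zero, add_assoc] at this)
      (lt_min hδ (half_pos hr))
  obtain ⟨-, -, hXa⟩ := hK a (mem_closedBall_iff_norm.2 (ha.le.trans (min_le_right _ _)))
  obtain ⟨hφb, -, hXb⟩ := hK b (mem_closedBall_iff_norm.2 (hb.le.trans (min_le_right _ _)))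
  have hvb' := (hvb.isUpperTestJet hXb).add_jet hφb
  simp only [add_assoc, ← EReal.coe_add, neg_add_cancel, EReal.coe_zero, add_zero] at hvb'
  refine ⟨a, mem_of_mem_nhds hXa, b, mem_of_mem_nhds hXb, _, _, hua.isUpperTestJet hXa, hvb',
    hb.trans_le (min_le_left _ _), p + q, hpq.trans_le (min_le_left _ _),
    (-δ - (α + β), 0, symMat (δ • .id ℝ (En n) - (A + B))), ⟨?_, rfl, psd_symMat fun z => ?_⟩, ?_⟩
  · linarith [min_le_left δ (r / 2)]
  · have := (hAB z).trans (mul_le_mul_of_nonneg_right (min_le_left δ (r / 2)) (sq_nonneg ‖z‖))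
    simpa [inner_sub_left, real_inner_smul_left] using this
  · rw [map_sub, map_add, map_smul]
    refine Prod.ext ?_ (Prod.ext ?_ ?_)
    all_goals
      simp only [Prod.fst_add, Prod.snd_add]
      abel

theorem tendsto_smul_nhdsGT_zero (A : SymMat n) :
    Tendsto (fun t : ℝ => t • A) (𝓝[>] 0) (𝓝 0) := by
  have hcont : Continuous fun t : ℝ => t • A :=
    continuous_induced_rng.2 (continuous_id.smul continuous_const)
  exact tendsto_nhdsWithin_of_tendsto_nhds (hcont.tendsto' 0 0 (zero_smul ℝ A))

theorem jet_mem_of_forall_lt (hFG : F + G ⊆ H) (hH : IsClosed H) (hHmono : H + minimalCone n ⊆ H)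
    (hu : USCOn u X) (hv : USCOn v X) (huF : CCSubharmonicOn F u X) (hvG : CCSubharmonicOn G v X)
    {x : En n} (hX : X ∈ 𝓝 x) {φ : En n → ℝ} (hφ : ContDiffAt ℝ 2 φ x)
    (hlt : ∀ᶠ y in 𝓝 x, y ≠ x → u y + v y < φ y) (heq : u x + v x = φ x) : jet φ x ∈ H := by
  have happrox : ∀ δ : ℝ, 0 < δ → ∃ b w : En n, ‖b - x‖ < δ ∧ ‖w‖ < δ ∧
      (-δ, w, δ • symMat (.id ℝ (En n))) + jet φ b ∈ H := by
    intro δ hδ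
    obtain ⟨a, ha, b, hb, J₁, J₂, hJ₁, hJ₂, hbx, w, hw, m, hm, hsum⟩ :=
      exists_isUpperTestJet_add_eq hu hv hX hφ hlt heq hδ
    exact ⟨b, w, hbx, hw, hsum ▸ hHmono (add_mem_add
      (hFG (add_mem_add (huF a ha J₁ hJ₁) (hvG b hb J₂ hJ₂))) hm)⟩
  choose! b w hbx hw hmem using happrox
  have hid : Tendsto (fun δ : ℝ => δ) (𝓝[>] 0) (𝓝 0) := tendsto_id'.2 nhdsWithin_le_nhds
  have hpos : ∀ᶠ δ : ℝ in 𝓝[>] 0, 0 < δ := self_mem_nhdsWithin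
  have hb_lim : Tendsto b (𝓝[>] 0) (𝓝 x) :=
    tendsto_iff_norm_sub_tendsto_zero.2 (squeeze_zero' (.of_forall fun _ => norm_nonneg _)
      (hpos.mono fun δ hδ => (hbx δ hδ).le) hid)
  have hw_lim : Tendsto w (𝓝[>] 0) (𝓝 0) :=
    squeeze_zero_norm' (hpos.mono fun δ hδ => (hw δ hδ).le) hid
  have hlim := (hid.neg.prodMk_nhds (hw_lim.prodMk_nhds
    (tendsto_smul_nhdsGT_zero (symMat (.id ℝ (En n)))))).add
      ((continuousAt_jet hφ).tendsto.comp hb_lim)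
  rw [neg_zero, Prod.mk_zero_zero, Prod.mk_zero_zero, zero_add] at hlim
  exact hH.mem_of_tendsto hlim (hpos.mono hmem)

theorem statement_17_general (hFG : F + G ⊆ H) (hH : IsClosed H) (hHmono : H + minimalCone n ⊆ H)
    (hu : USCOn u X) (hv : USCOn v X) (huF : CCSubharmonicOn F u X)
    (hvG : CCSubharmonicOn G v X) :
    USCOn (fun x => u x + v x) X ∧ CCSubharmonicOn H (fun x => u x + v x) X := by
  refine ⟨hu.add hv, fun x _ J hJ => ?_⟩
  obtain ⟨φ, hφ, hX, hle, heq, rfl⟩ := isUpperTestJet_iff.1 hJ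
  have hperturb : ∀ η : ℝ, 0 < η →
      jet φ x + (0, 0, η • symMat (.id ℝ (En n))) ∈ H := by
    intro η hη
    have hψ := contDiff_quadratic x 0 0 (η • .id ℝ (En n))
    rw [← map_smul, ← jet_quadratic x, ← jet_add hφ hψ.contDiffAt]
    refine jet_mem_of_forall_lt hFG hH hHmono hu hv huF hvG hX (hφ.add hψ.contDiffAt) ?_ ?_
    · filter_upwards [hle] with y hy hne
      refine hy.trans_lt (EReal.coe_lt_coe_iff.2 (lt_add_of_pos_right _ ?_))
      have : 0 < η * ‖y - x‖ ^ 2 := by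
        have := norm_pos_iff.2 (sub_ne_zero.2 hne)
        positivity
      simpa [quadratic, real_inner_smul_left] using this
    · simpa [quadratic] using heq
  have hlim : Tendsto (fun η : ℝ => jet φ x + (0, 0, η • symMat (.id ℝ (En n)))) (𝓝[>] 0)
      (𝓝 (jet φ x + 0)) :=
    tendsto_const_nhds.add (tendsto_const_nhds.prodMk_nhds
      (tendsto_const_nhds.prodMk_nhds (tendsto_smul_nhdsGT_zero _)))
  rw [add_zero] at hlim
  exact hH.mem_of_tendsto hlim (eventually_mem_nhdsWithin.mono hperturb)

end Addition

/-- Constant coefficient subharmonic addition theorem. -/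
theorem statement_17 {n : ℕ} (M : Set (Jet n)) (hM : IsMonotonicityConeSubequation M)
    (F : Set (Jet n)) (hF : IsCCSubequation F) (hFM : F + M ⊆ F)
    (X : Set (En n)) (hX : IsOpen X) (u v : En n → EReal)
    (hu : USCOn u X) (hv : USCOn v X)
    (huF : CCSubharmonicOn F u X) (hvF : CCSubharmonicOn (dualJ F) v X) :
    USCOn (fun x => u x + v x) X ∧ CCSubharmonicOn (dualJ M) (fun x => u x + v x) X :=
  statement_17_general (add_dualJ_subset hFM) (isClosed_dualJ M)
    (dualJ_add_subset hM.1.add_minimalCone_subset) hu hv huF hvF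

end
end
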